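/- arXiv:1012.4728 — 4 statements merged into one kernel-verified Lean document; each statement's English description precedes it below -/
import Mathlib

section
/- There exists a universal constant K > 0 such that the following holds for all positive integers k, n and all ε. Let ρ_1, …, ρ_k be n×n positive semidefinite complex matrices, let ρ := ∑_{i=1}^k ρ_i, and let P_1, …, P_k be n×n orthogonal projections such that ∑_{i≠j} Tr(P_i P_j P_i ρ_i) ≤ ε and ∑_{i≠j} Tr(P_i ρ_j) ≤ ε, where 0 < ε ≤ Tr(ρ). Then there exist n×n orthogonal projections Q_1, …, Q_k with Q_i Q_j = 0 for all i ≠ j, such that ∑_{i=1}^k Tr((P_i − Q_i)² ρ_i) ≤ K · ε^{1/2} · Tr(ρ)^{1/2}. -/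
open Matrix Finset
open scoped ComplexOrder

/-!
Put `σ i = P i * ρ i * P i` and split each `σ i` into weighted unit eigenvectors, all lying in the
range of `P i`. Collected over all `i`, these vectors `v α` are nearly orthonormal on average: their
total weighted overlap is at most `∑ i, ∑ j ≠ i, Tr (P j * σ i)`. Let `F` be the spectral subspace
`1 / 2 ≤ S` of the frame operator `S = ∑ α, |v α⟩⟨v α|`. Discarding the vectors of least weight, so
that exactly `dim F` of them remain, loses little weight, and the symmetric (Löwdin)
orthogonalization of the projections of the remaining vectors to `F` yields an orthonormal basis
`w` of `F` close to them. `Q i` projects onto the span of the `w α` coming from block `i`.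

As `1 / 2 ≤ S` on `F` and `S ≤ ∑ j, P j`, we get `Q i ≤ 2 • ∑ j, P j`. Together with the operator
inequality `(p - q)² ≤ 2 • (p - p q p + (1 - p) q (1 - p))` this passes from `σ i` to `ρ i`.
-/

section Selection

variable {I : Type*} [Fintype I]

theorem exists_card_eq_threshold {R : Type*} [LinearOrder R] [Nonempty R] (l : I → R) {d : ℕ}
    (hd : d ≤ Fintype.card I) :
    ∃ J : Finset I, ∃ c, J.card = d ∧ (∀ i ∈ J, c ≤ l i) ∧ ∀ i ∉ J, l i ≤ c := by
  classical
  induction d with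
  | zero =>
    obtain ⟨c, hc⟩ := (Set.finite_range l).bddAbove
    exact ⟨∅, c, card_empty, by simp, fun i _ => hc (Set.mem_range_self i)⟩
  | succ d ih =>
    obtain ⟨J, c, hJ, hJc, hcJ⟩ := ih (by omega)
    have hne : Jᶜ.Nonempty := by
      rw [← card_pos, card_compl]
      omega
    obtain ⟨m, hm, hmax⟩ := exists_max_image Jᶜ l hne
    rw [mem_compl] at hm
    refine ⟨insert m J, l m, by rw [card_insert_of_notMem hm, hJ], ?_, fun i hi => ?_⟩
    · rw [forall_mem_insert]
      exact ⟨le_rfl, fun j hj => (hcJ m hm).trans (hJc j hj)⟩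
    · exact hmax i (mem_compl.2 fun h => hi (mem_insert_of_mem h))

theorem exists_card_eq_sum_mul_le_sum (l : I → ℝ) {o : I → ℝ} (ho₀ : ∀ i, 0 ≤ o i)
    (ho₁ : ∀ i, o i ≤ 1) {d : ℕ} (ho : ∑ i, o i = d) :
    ∃ J : Finset I, J.card = d ∧ ∑ i, l i * o i ≤ ∑ i ∈ J, l i := by
  classical
  have hd : d ≤ Fintype.card I := by
    have : (d : ℝ) ≤ ∑ _i : I, 1 := ho ▸ sum_le_sum fun i _ => ho₁ i
    simpa using this
  obtain ⟨J, c, hJ, hJc, hcJ⟩ := exists_card_eq_threshold l hd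
  have hpoint : ∀ i, l i * o i ≤ c * o i + if i ∈ J then l i - c else 0 := by
    intro i
    split_ifs with hi
    · nlinarith [hJc i hi, ho₁ i]
    · nlinarith [hcJ i hi, ho₀ i]
  refine ⟨J, hJ, ?_⟩
  calc ∑ i, l i * o i
      ≤ ∑ i, (c * o i + if i ∈ J then l i - c else 0) := sum_le_sum fun i _ => hpoint i
    _ = c * d + (∑ i ∈ J, l i - d * c) := by
        rw [sum_add_distrib, ← mul_sum, ho, sum_ite_mem, univ_inter, sum_sub_distrib, sum_const,
          hJ, nsmul_eq_mul]
    _ = ∑ i ∈ J, l i := by ring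

end Selection

section Polar

open scoped InnerProductSpace MatrixOrder

variable {𝕜 E : Type*} [RCLike 𝕜] [NormedAddCommGroup E] [InnerProductSpace 𝕜 E]

-- This is the quadratic form of `T - (3 T² - T⁴) / 2 = T (T - 1)² (T + 2) / 2 ≥ 0`.
theorem three_mul_norm_sq_sub_le_re_inner {T : E →ₗ[𝕜] E} (hT : T.IsPositive) (x : E) :
    (3 * ‖T x‖ ^ 2 - ‖T (T x)‖ ^ 2) / 2 ≤ RCLike.re ⟪x, T x⟫_𝕜 := by
  have h₁ : 0 ≤ RCLike.re ⟪T x - x, T (T x - x)⟫_𝕜 := hT.re_inner_nonneg_right _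
  have h₂ : 0 ≤ ‖T (T x) - T x‖ ^ 2 := sq_nonneg _
  have hsymm : ⟪x, T (T x)⟫_𝕜 = ⟪T x, T x⟫_𝕜 := (hT.isSymmetric _ _).symm
  rw [map_sub, inner_sub_left, inner_sub_right, inner_sub_right, hsymm] at h₁
  simp only [map_sub, inner_self_eq_norm_sq] at h₁
  rw [norm_sub_sq (𝕜 := 𝕜), inner_re_symm] at h₂
  linarith

variable [FiniteDimensional 𝕜 E]

theorem exists_linearIsometryEquiv_of_norm_eq {T L : E →ₗ[𝕜] E} (h : ∀ x, ‖T x‖ = ‖L x‖) :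
    ∃ U : E ≃ₗᵢ[𝕜] E, ∀ x, U (T x) = L x := by
  have hker : LinearMap.ker T ≤ LinearMap.ker L := fun x hx => by
    rw [LinearMap.mem_ker, ← norm_eq_zero] at hx ⊢
    rw [← h, hx]
  let g : LinearMap.range T →ₗ[𝕜] E :=
    (LinearMap.ker T).liftQ L hker ∘ₗ T.quotKerEquivRange.symm.toLinearMap
  have hg : ∀ x, g (T.rangeRestrict x) = L x := fun x => by
    have : T.quotKerEquivRange.symm (T.rangeRestrict x) = (LinearMap.ker T).mkQ x :=
      T.quotKerEquivRange_symm_apply_image x (LinearMap.mem_range_self T x)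
    simp [g, this]
  let g' : LinearMap.range T →ₗᵢ[𝕜] E :=
    ⟨g, fun y => by
      obtain ⟨x, rfl⟩ := T.surjective_rangeRestrict y
      rw [hg, ← h]
      rfl⟩
  exact ⟨g'.extend.toLinearIsometryEquiv rfl, fun x =>
    (g'.extend_apply (T.rangeRestrict x)).trans (hg x)⟩

theorem exists_isPositive_comp_self_eq {A : E →ₗ[𝕜] E} (hA : A.IsPositive) :
    ∃ T : E →ₗ[𝕜] E, T.IsPositive ∧ T ∘ₗ T = A := by
  let b := stdOrthonormalBasis 𝕜 E
  have hM : 0 ≤ A.toMatrix b.toBasis b.toBasis :=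
    ((LinearMap.posSemidef_toMatrix_iff b).2 hA).nonneg
  refine ⟨Matrix.toLin b.toBasis b.toBasis (CFC.sqrt (A.toMatrix b.toBasis b.toBasis)), ?_, ?_⟩
  · rw [← LinearMap.posSemidef_toMatrix_iff b, LinearMap.toMatrix_toLin]
    exact (CFC.sqrt_nonneg _).posSemidef
  · rw [← Matrix.toLin_mul, CFC.sqrt_mul_sqrt_self _ hM, Matrix.toLin_toMatrix]

theorem exists_polar_decomposition (L : E →ₗ[𝕜] E) :
    ∃ (U : E ≃ₗᵢ[𝕜] E) (T : E →ₗ[𝕜] E), T.IsPositive ∧ ∀ x, U (T x) = L x := by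
  obtain ⟨T, hT, hTT⟩ := exists_isPositive_comp_self_eq L.isPositive_adjoint_comp_self
  have hnorm : ∀ x, ‖T x‖ = ‖L x‖ := fun x => by
    rw [← sq_eq_sq₀ (norm_nonneg _) (norm_nonneg _), ← inner_self_eq_norm_sq (𝕜 := 𝕜),
      ← inner_self_eq_norm_sq (𝕜 := 𝕜), hT.isSymmetric, ← LinearMap.adjoint_inner_right]
    exact congrArg (fun S : E →ₗ[𝕜] E => RCLike.re ⟪x, S x⟫_𝕜) hTT
  obtain ⟨U, hU⟩ := exists_linearIsometryEquiv_of_norm_eq hnorm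
  exact ⟨U, T, hT, hU⟩

-- `w` is the symmetric (Löwdin) orthogonalization of `m`: the unitary polar factor of `b α ↦ m α`.
theorem exists_orthonormalBasis_re_inner_ge {J : Type*} [Fintype J]
    (hJ : Module.finrank 𝕜 E = Fintype.card J) (m : J → E) :
    ∃ w : OrthonormalBasis J 𝕜 E, ∀ α,
      (3 * ‖m α‖ ^ 2 - ∑ β, ‖⟪m β, m α⟫_𝕜‖ ^ 2) / 2 ≤ RCLike.re ⟪w α, m α⟫_𝕜 := by
  let b : OrthonormalBasis J 𝕜 E :=
    (stdOrthonormalBasis 𝕜 E).reindex (Fintype.equivOfCardEq (by simp [hJ]))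
  obtain ⟨U, T, hT, hUT⟩ := exists_polar_decomposition (b.toBasis.constr 𝕜 m)
  have hm : ∀ α, m α = U (T (b α)) := fun α => by
    rw [hUT, ← b.coe_toBasis, Module.Basis.constr_basis]
  refine ⟨b.map U, fun α => ?_⟩
  have hgram : ∑ β, ‖⟪m β, m α⟫_𝕜‖ ^ 2 = ‖T (T (b α))‖ ^ 2 := by
    rw [← b.sum_sq_norm_inner_right]
    refine sum_congr rfl fun β _ => ?_
    rw [hm, hm, U.inner_map_map, hT.isSymmetric]
  rw [hgram, hm, U.norm_map, OrthonormalBasis.map_apply, U.inner_map_map]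
  exact three_mul_norm_sq_sub_le_re_inner hT (b α)

end Polar

section SpectralSubspace

open scoped InnerProductSpace

variable {𝕜 E κ : Type*} [RCLike 𝕜] [NormedAddCommGroup E] [InnerProductSpace 𝕜 E] [Fintype κ]

theorem finrank_span_image (u : OrthonormalBasis κ 𝕜 E) (X : Finset κ) :
    Module.finrank 𝕜 (Submodule.span 𝕜 (u '' X)) = X.card := by
  rw [Set.image_eq_range]
  exact (finrank_span_eq_card (u.orthonormal.comp _ Subtype.val_injective).linearIndependent).trans
    (Fintype.card_coe X)

variable [FiniteDimensional 𝕜 E]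

theorem inner_starProjection_span_image [DecidableEq κ] (u : OrthonormalBasis κ 𝕜 E)
    (X : Finset κ) (x : κ) (y : E) :
    ⟪u x, (Submodule.span 𝕜 (u '' X)).starProjection y⟫_𝕜 = if x ∈ X then ⟪u x, y⟫_𝕜 else 0 := by
  rw [← Submodule.inner_starProjection_left_eq_right]
  split_ifs with hx
  · rw [Submodule.starProjection_eq_self_iff.2 (Submodule.subset_span (Set.mem_image_of_mem u hx))]
  · have hmem : u x ∈ (Submodule.span 𝕜 (u '' X))ᗮ := by
      rw [← Submodule.span_singleton_le_iff_mem, ← Submodule.isOrtho_iff_le, Submodule.isOrtho_span]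
      rintro _ rfl _ ⟨z, hz, rfl⟩
      exact u.orthonormal.2 (ne_of_mem_of_not_mem hz hx).symm
    rw [(Submodule.starProjection_apply_eq_zero_iff _).2 hmem, inner_zero_left]

theorem norm_starProjection_span_image_sq (u : OrthonormalBasis κ 𝕜 E) (X : Finset κ) (y : E) :
    ‖(Submodule.span 𝕜 (u '' X)).starProjection y‖ ^ 2 = ∑ x ∈ X, ‖⟪u x, y⟫_𝕜‖ ^ 2 := by
  classical
  rw [← u.sum_sq_norm_inner_right]
  simp [inner_starProjection_span_image, apply_ite, ite_pow]

end SpectralSubspace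

section Frame

open scoped InnerProductSpace

variable {𝕜 E I κ : Type*} [RCLike 𝕜] [NormedAddCommGroup E] [InnerProductSpace 𝕜 E]
  [Fintype I] [Fintype κ]

open Classical in
/-- The total squared overlap of `v α` with the other members of the family `v`. -/
noncomputable def overlap (𝕜 : Type*) {E I : Type*} [RCLike 𝕜] [NormedAddCommGroup E]
    [InnerProductSpace 𝕜 E] [Fintype I] (v : I → E) (α : I) : ℝ :=
  ∑ β ∈ univ.erase α, ‖⟪v β, v α⟫_𝕜‖ ^ 2

theorem overlap_nonneg (v : I → E) (α : I) : 0 ≤ overlap 𝕜 v α :=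
  sum_nonneg fun _ _ => sq_nonneg _

theorem sum_norm_inner_sq_eq_one_add_overlap {v : I → E} {α : I} (hv : ‖v α‖ = 1) :
    ∑ β, ‖⟪v β, v α⟫_𝕜‖ ^ 2 = 1 + overlap 𝕜 v α := by
  classical
  rw [overlap, ← add_sum_erase _ _ (mem_univ α), inner_self_eq_norm_sq_to_K, hv]
  simp

/-- The orthonormal basis `u` diagonalizes the frame operator `∑ α, |v α⟩⟨v α|` with eigenvalues
`s`; this is expressed through the quadratic form of the frame operator. -/
def DiagonalizesFrame (v : I → E) (u : OrthonormalBasis κ 𝕜 E) (s : κ → ℝ) : Prop :=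
  ∀ y, ∑ α, ‖⟪v α, y⟫_𝕜‖ ^ 2 = ∑ x, s x * ‖⟪u x, y⟫_𝕜‖ ^ 2

theorem exists_diagonalizesFrame [FiniteDimensional 𝕜 E] (v : I → E) :
    ∃ (u : OrthonormalBasis (Fin (Module.finrank 𝕜 E)) 𝕜 E) (s : Fin (Module.finrank 𝕜 E) → ℝ),
      DiagonalizesFrame v u s := by
  let S : E →ₗ[𝕜] E := ∑ α, (InnerProductSpace.rankOne 𝕜 (v α) (v α)).toLinearMap
  have hS : S.IsSymmetric := LinearMap.isSymmetric_sum _ fun α _ =>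
    InnerProductSpace.isSymmetric_rankOne_self (v α)
  let u := hS.eigenvectorBasis rfl
  let s := hS.eigenvalues rfl
  have hu : ∀ x, S (u x) = (s x : 𝕜) • u x := hS.apply_eigenvectorBasis rfl
  refine ⟨u, s, fun y => ?_⟩
  have hv : ⟪y, S y⟫_𝕜 = ((∑ α, ‖⟪v α, y⟫_𝕜‖ ^ 2 : ℝ) : 𝕜) := by
    simp only [S, LinearMap.sum_apply, inner_sum, ContinuousLinearMap.coe_coe,
      InnerProductSpace.rankOne_apply, inner_smul_right]
    push_cast
    exact sum_congr rfl fun α _ => by rw [← inner_conj_symm y, RCLike.mul_conj]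
  have hu' : ⟪y, S y⟫_𝕜 = ((∑ x, s x * ‖⟪u x, y⟫_𝕜‖ ^ 2 : ℝ) : 𝕜) := by
    rw [← u.sum_inner_mul_inner]
    push_cast
    refine sum_congr rfl fun x _ => ?_
    rw [← hS, hu, inner_smul_left, RCLike.conj_ofReal, mul_left_comm, ← inner_conj_symm y,
      RCLike.conj_mul]
  exact_mod_cast hv.symm.trans hu'

namespace DiagonalizesFrame

variable {v : I → E} {u : OrthonormalBasis κ 𝕜 E} {s : κ → ℝ}

theorem sum_norm_inner_sq (h : DiagonalizesFrame v u s) (x : κ) :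
    ∑ α, ‖⟪u x, v α⟫_𝕜‖ ^ 2 = s x := by
  classical
  simp only [norm_inner_symm (u x)]
  simp [h (u x), u.inner_eq_ite, apply_ite, ite_pow]

theorem nonneg (h : DiagonalizesFrame v u s) (x : κ) : 0 ≤ s x :=
  h.sum_norm_inner_sq x ▸ sum_nonneg fun _ _ => sq_nonneg _

theorem inner_eq_zero (h : DiagonalizesFrame v u s) {x : κ} (hx : s x = 0) (α : I) :
    ⟪u x, v α⟫_𝕜 = 0 := by
  have := (sum_eq_zero_iff_of_nonneg fun _ _ => sq_nonneg _).1 ((h.sum_norm_inner_sq x).trans hx)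
  simpa using this α (mem_univ α)

theorem sum_norm_inner_sq_div_le_one (h : DiagonalizesFrame v u s) (α : I) :
    ∑ x, ‖⟪u x, v α⟫_𝕜‖ ^ 2 / s x ≤ 1 := by
  set q := ∑ x, ‖⟪u x, v α⟫_𝕜‖ ^ 2 / s x with hq
  -- The pseudo-inverse of the frame operator applied to `v α`.
  let y : E := ∑ x, (⟪u x, v α⟫_𝕜 / (s x : 𝕜)) • u x
  have hy : ∀ x, ⟪u x, y⟫_𝕜 = ⟪u x, v α⟫_𝕜 / (s x : 𝕜) := fun x =>
    u.orthonormal.inner_right_fintype _ x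
  have hframe : ∑ β, ‖⟪v β, y⟫_𝕜‖ ^ 2 = q := by
    rw [h]
    refine sum_congr rfl fun x _ => ?_
    rw [hy, norm_div, div_pow, RCLike.norm_ofReal, sq_abs]
    by_cases hx : s x = 0
    · simp [hx]
    · field_simp
  have hinner : ⟪v α, y⟫_𝕜 = (q : 𝕜) := by
    rw [← u.sum_inner_mul_inner, hq]
    push_cast
    refine sum_congr rfl fun x _ => ?_
    rw [hy, ← inner_conj_symm (v α), ← mul_div_assoc, RCLike.conj_mul]
  have hle : q ^ 2 ≤ q := by
    calc q ^ 2 = ‖⟪v α, y⟫_𝕜‖ ^ 2 := by rw [hinner, RCLike.norm_ofReal, sq_abs]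
      _ ≤ ∑ β, ‖⟪v β, y⟫_𝕜‖ ^ 2 :=
        single_le_sum (f := fun β => ‖⟪v β, y⟫_𝕜‖ ^ 2) (fun _ _ => sq_nonneg _) (mem_univ α)
      _ = q := hframe
  nlinarith

-- The numbers `‖⟪u x, v α⟫‖ ^ 2` form a probability distribution for which `s` has mean
-- `1 + overlap 𝕜 v α` and `1 / s` has mean at most `1`.
theorem one_sub_mul_overlap_le (h : DiagonalizesFrame v u s) {α : I} (hv : ‖v α‖ = 1) {b c : ℝ}
    (hc : 0 ≤ c) {f : κ → ℝ} (hf : ∀ x, 0 < s x → 1 + b + c - b * s x - c / s x ≤ f x) :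
    1 - b * overlap 𝕜 v α ≤ ∑ x, f x * ‖⟪u x, v α⟫_𝕜‖ ^ 2 := by
  have hone : ∑ x, ‖⟪u x, v α⟫_𝕜‖ ^ 2 = 1 := by rw [u.sum_sq_norm_inner_right, hv, one_pow]
  have hs : ∑ x, s x * ‖⟪u x, v α⟫_𝕜‖ ^ 2 = 1 + overlap 𝕜 v α := by
    rw [← h, sum_norm_inner_sq_eq_one_add_overlap hv]
  calc 1 - b * overlap 𝕜 v α
      ≤ (1 + b + c) * ∑ x, ‖⟪u x, v α⟫_𝕜‖ ^ 2 - b * ∑ x, s x * ‖⟪u x, v α⟫_𝕜‖ ^ 2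
          - c * ∑ x, ‖⟪u x, v α⟫_𝕜‖ ^ 2 / s x := by
        rw [hone, hs]
        nlinarith [h.sum_norm_inner_sq_div_le_one α]
    _ = ∑ x, (1 + b + c - b * s x - c / s x) * ‖⟪u x, v α⟫_𝕜‖ ^ 2 := by
        simp only [mul_sum, ← sum_sub_distrib]
        exact sum_congr rfl fun x _ => by ring
    _ ≤ ∑ x, f x * ‖⟪u x, v α⟫_𝕜‖ ^ 2 := by
        refine sum_le_sum fun x _ => ?_
        rcases (h.nonneg x).eq_or_lt with hx | hx
        · simp [h.inner_eq_zero hx.symm]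
        · gcongr
          exact hf x hx

theorem exists_card_eq_sum_sub_le (h : DiagonalizesFrame v u s) (hv : ∀ α, ‖v α‖ = 1) {l : I → ℝ}
    (hl : ∀ α, 0 ≤ l α) :
    ∃ J : Finset I, J.card = (univ.filter fun x => 1 / 2 ≤ s x).card ∧
      ∑ α, l α - 4 * ∑ α, l α * overlap 𝕜 v α ≤ ∑ α ∈ J, l α := by
  let o : I → ℝ := fun α => ∑ x with 1 / 2 ≤ s x, ‖⟪u x, v α⟫_𝕜‖ ^ 2 / s x
  have hterm : ∀ α x, 0 ≤ ‖⟪u x, v α⟫_𝕜‖ ^ 2 / s x := fun α x =>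
    div_nonneg (sq_nonneg _) (h.nonneg x)
  have hsum : ∑ α, o α = (univ.filter fun x => 1 / 2 ≤ s x).card := by
    rw [sum_comm, card_eq_sum_ones, Nat.cast_sum]
    refine sum_congr rfl fun x hx => ?_
    have : (1 : ℝ) / 2 ≤ s x := (mem_filter.1 hx).2
    rw [← sum_div, h.sum_norm_inner_sq, div_self (by linarith), Nat.cast_one]
  obtain ⟨J, hJ, hJl⟩ := exists_card_eq_sum_mul_le_sum l (fun α => sum_nonneg fun x _ => hterm α x)
    (fun α => (sum_le_univ_sum_of_nonneg (hterm α)).trans (h.sum_norm_inner_sq_div_le_one α)) hsum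
  refine ⟨J, hJ, le_trans ?_ hJl⟩
  have ho : ∀ α, 1 - 4 * overlap 𝕜 v α ≤ o α := fun α => by
    refine (h.one_sub_mul_overlap_le (hv α) (b := 4) (c := 3)
      (f := fun x => if 1 / 2 ≤ s x then 1 / s x else 0) (by norm_num) fun x hx => ?_).trans_eq ?_
    · split_ifs with hx'
      · field_simp
        nlinarith [sq_nonneg (s x - 1)]
      · field_simp
        nlinarith
    · simp only [o, sum_filter, ite_mul, zero_mul, one_div_mul_eq_div]
  rw [mul_sum, ← sum_sub_distrib]
  exact sum_le_sum fun α _ => by linarith [mul_le_mul_of_nonneg_left (ho α) (hl α)]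

variable [FiniteDimensional 𝕜 E]

theorem norm_starProjection_sq_le (h : DiagonalizesFrame v u s) (y : E) :
    ‖(Submodule.span 𝕜 (u '' (univ.filter fun x => 1 / 2 ≤ s x : Finset κ))).starProjection y‖ ^ 2
      ≤ 2 * ∑ β, ‖⟪v β, y⟫_𝕜‖ ^ 2 := by
  rw [norm_starProjection_span_image_sq, h, mul_sum, sum_filter]
  refine sum_le_sum fun x _ => ?_
  split_ifs with hx
  · nlinarith [sq_nonneg ‖⟪u x, y⟫_𝕜‖]
  · have := h.nonneg x
    positivity

theorem sum_norm_inner_starProjection_sq_le (h : DiagonalizesFrame v u s) {α : I} (hv : ‖v α‖ = 1)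
    (X : Finset κ) :
    ∑ β, ‖⟪v β, (Submodule.span 𝕜 (u '' X)).starProjection (v α)⟫_𝕜‖ ^ 2
      ≤ 1 + overlap 𝕜 v α := by
  classical
  rw [h, ← sum_norm_inner_sq_eq_one_add_overlap hv, h]
  refine sum_le_sum fun x _ => mul_le_mul_of_nonneg_left ?_ (h.nonneg x)
  rw [inner_starProjection_span_image]
  split_ifs
  · exact le_rfl
  · simp

theorem one_sub_two_mul_overlap_le (h : DiagonalizesFrame v u s) {α : I} (hv : ‖v α‖ = 1) :
    1 - 2 * overlap 𝕜 v α ≤ ‖(Submodule.span 𝕜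
      (u '' (univ.filter fun x => 1 / 2 ≤ s x : Finset κ))).starProjection (v α)‖ ^ 2 := by
  rw [norm_starProjection_span_image_sq]
  refine (h.one_sub_mul_overlap_le hv (b := 2) (c := 2)
    (f := fun x => if 1 / 2 ≤ s x then 1 else 0) (by norm_num) fun x hx => ?_).trans_eq ?_
  · split_ifs with hx'
    · field_simp
      nlinarith [sq_nonneg (s x - 1)]
    · field_simp
      nlinarith
  · simp only [sum_filter, ite_mul, zero_mul, one_mul]

theorem exists_orthonormal (h : DiagonalizesFrame v u s) (hv : ∀ α, ‖v α‖ = 1) {J : Finset I}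
    (hJ : J.card = (univ.filter fun x => 1 / 2 ≤ s x).card) :
    ∃ w : J → E, Orthonormal 𝕜 w ∧
      (∀ y, ∑ α, ‖⟪w α, y⟫_𝕜‖ ^ 2 ≤ 2 * ∑ β, ‖⟪v β, y⟫_𝕜‖ ^ 2) ∧
      ∀ α : J, 1 - 7 * overlap 𝕜 v α ≤ ‖⟪w α, v α⟫_𝕜‖ ^ 2 := by
  let X := univ.filter fun x => 1 / 2 ≤ s x
  let F := Submodule.span 𝕜 (u '' X)
  obtain ⟨w, hw⟩ := exists_orthonormalBasis_re_inner_ge (𝕜 := 𝕜) (E := F) (J := J)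
    (by rw [finrank_span_image, Fintype.card_coe, hJ]) fun α => F.orthogonalProjectionOnto (v α)
  have hwF : ∀ α y, ⟪w α, F.orthogonalProjectionOnto y⟫_𝕜 = ⟪(w α : E), y⟫_𝕜 := fun α y =>
    F.inner_orthogonalProjectionOnto_eq_of_mem_left (w α) y
  refine ⟨fun α => w α, w.orthonormal.comp_linearIsometry F.subtypeₗᵢ, fun y => ?_, fun α => ?_⟩
  · calc ∑ α, ‖⟪(w α : E), y⟫_𝕜‖ ^ 2 = ‖F.starProjection y‖ ^ 2 := by
          simp only [← hwF, w.sum_sq_norm_inner_right, Submodule.starProjection_apply,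
            Submodule.coe_norm]
      _ ≤ 2 * ∑ β, ‖⟪v β, y⟫_𝕜‖ ^ 2 := h.norm_starProjection_sq_le y
  have hnorm : 1 - 2 * overlap 𝕜 v α ≤ ‖F.orthogonalProjectionOnto (v α)‖ ^ 2 :=
    h.one_sub_two_mul_overlap_le (hv α)
  have hgram : ∑ β : J, ‖⟪F.orthogonalProjectionOnto (v β), F.orthogonalProjectionOnto (v α)⟫_𝕜‖ ^ 2
      ≤ 1 + overlap 𝕜 v α := by
    simp only [Submodule.inner_orthogonalProjectionOnto_eq_of_mem_right,
      ← Submodule.starProjection_apply]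
    refine le_trans ?_ (h.sum_norm_inner_starProjection_sq_le (hv α) X)
    rw [sum_coe_sort J fun β => ‖⟪v β, F.starProjection (v α)⟫_𝕜‖ ^ 2]
    exact sum_le_univ_sum_of_nonneg fun _ => sq_nonneg _
  have hre : 1 - 7 / 2 * overlap 𝕜 v α ≤ ‖⟪(w α : E), v α⟫_𝕜‖ := by
    refine le_trans ?_ (RCLike.re_le_norm _)
    rw [← hwF]
    linarith [hw α]
  nlinarith [overlap_nonneg (𝕜 := 𝕜) v α, norm_nonneg ⟪(w α : E), v α⟫_𝕜]

end DiagonalizesFrame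

theorem exists_orthonormal_of_unit_vectors [FiniteDimensional 𝕜 E] (hv : ∀ α, ‖v α‖ = 1)
    {l : I → ℝ} (hl : ∀ α, 0 ≤ l α) :
    ∃ (J : Finset I) (w : J → E), Orthonormal 𝕜 w ∧
      (∀ y, ∑ α, ‖⟪w α, y⟫_𝕜‖ ^ 2 ≤ 2 * ∑ β, ‖⟪v β, y⟫_𝕜‖ ^ 2) ∧
      ∑ α, l α - 11 * ∑ α, l α * overlap 𝕜 v α ≤ ∑ α : J, l α * ‖⟪w α, v α⟫_𝕜‖ ^ 2 := by
  obtain ⟨u, s, h⟩ := exists_diagonalizesFrame (𝕜 := 𝕜) v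
  obtain ⟨J, hJ, hJl⟩ := h.exists_card_eq_sum_sub_le hv hl
  obtain ⟨w, hw, hwv, hwα⟩ := h.exists_orthonormal hv hJ
  refine ⟨J, w, hw, hwv, ?_⟩
  have hle : ∑ α ∈ J, l α * overlap 𝕜 v α ≤ ∑ α, l α * overlap 𝕜 v α :=
    sum_le_univ_sum_of_nonneg fun α => mul_nonneg (hl α) (overlap_nonneg v α)
  calc ∑ α, l α - 11 * ∑ α, l α * overlap 𝕜 v α
      ≤ ∑ α ∈ J, l α - 7 * ∑ α ∈ J, l α * overlap 𝕜 v α := by linarith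
    _ = ∑ α : J, l α * (1 - 7 * overlap 𝕜 v α) := by
        rw [sum_coe_sort J fun α => l α * (1 - 7 * overlap 𝕜 v α), mul_sum, ← sum_sub_distrib]
        exact sum_congr rfl fun α _ => by ring
    _ ≤ ∑ α : J, l α * ‖⟪w α, v α⟫_𝕜‖ ^ 2 :=
        sum_le_sum fun α _ => mul_le_mul_of_nonneg_left (hwα α) (hl α)

end Frame

section Blocks

open scoped InnerProductSpace

variable {𝕜 E ι : Type*} [RCLike 𝕜] [NormedAddCommGroup E] [InnerProductSpace 𝕜 E]

theorem sum_norm_inner_sq_le_norm_map_sq {κ : Type*} [Fintype κ] {T : E →ₗ[𝕜] E}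
    (hT : T.IsSymmetric) {v : κ → E} (hv : Orthonormal 𝕜 v) (hTv : ∀ a, T (v a) = v a) (y : E) :
    ∑ a, ‖⟪v a, y⟫_𝕜‖ ^ 2 ≤ ‖T y‖ ^ 2 := by
  calc ∑ a, ‖⟪v a, y⟫_𝕜‖ ^ 2 = ∑ a, ‖⟪v a, T y⟫_𝕜‖ ^ 2 :=
        sum_congr rfl fun a _ => by rw [← hT, hTv]
    _ ≤ ‖T y‖ ^ 2 := hv.sum_inner_products_le (T y)

variable [Fintype ι] {κ : ι → Type*} [∀ i, Fintype (κ i)]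
  {T : ι → E →ₗ[𝕜] E} {v : ∀ i, κ i → E}

theorem sum_sigma_norm_inner_sq_le (hT : ∀ i, (T i).IsSymmetric) (hv : ∀ i, Orthonormal 𝕜 (v i))
    (hTv : ∀ i a, T i (v i a) = v i a) (y : E) :
    ∑ α : Σ i, κ i, ‖⟪v α.1 α.2, y⟫_𝕜‖ ^ 2 ≤ ∑ i, ‖T i y‖ ^ 2 := by
  rw [Fintype.sum_sigma]
  exact sum_le_sum fun i _ => sum_norm_inner_sq_le_norm_map_sq (hT i) (hv i) (hTv i) y

variable [DecidableEq ι]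

theorem overlap_sigma_le (hT : ∀ i, (T i).IsSymmetric) (hv : ∀ i, Orthonormal 𝕜 (v i))
    (hTv : ∀ i a, T i (v i a) = v i a) (i : ι) (a : κ i) :
    overlap 𝕜 (fun α : Σ i, κ i => v α.1 α.2) ⟨i, a⟩ ≤ ∑ j ∈ univ.erase i, ‖T j (v i a)‖ ^ 2 := by
  have hunit : ‖v i a‖ = 1 := (hv i).1 a
  have h := sum_sigma_norm_inner_sq_le hT hv hTv (v i a)
  rw [← add_sum_erase _ _ (mem_univ i), hTv, hunit] at h
  linarith [sum_norm_inner_sq_eq_one_add_overlap (𝕜 := 𝕜)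
    (v := fun α : Σ i, κ i => v α.1 α.2) (α := ⟨i, a⟩) hunit]

theorem exists_orthonormal_sigma [FiniteDimensional 𝕜 E] (hT : ∀ i, (T i).IsSymmetric)
    (hv : ∀ i, Orthonormal 𝕜 (v i)) (hTv : ∀ i a, T i (v i a) = v i a) {l : ∀ i, κ i → ℝ}
    (hl : ∀ i a, 0 ≤ l i a) :
    ∃ (J : Finset (Σ i, κ i)) (w : J → E), Orthonormal 𝕜 w ∧
      (∀ y, ∑ α, ‖⟪w α, y⟫_𝕜‖ ^ 2 ≤ 2 * ∑ i, ‖T i y‖ ^ 2) ∧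
      ∑ i, ∑ a, l i a - 11 * ∑ i, ∑ a, l i a * ∑ j ∈ univ.erase i, ‖T j (v i a)‖ ^ 2
        ≤ ∑ i, ∑ α : J with α.1.1 = i, l α.1.1 α.1.2 * ‖⟪w α, v α.1.1 α.1.2⟫_𝕜‖ ^ 2 := by
  obtain ⟨J, w, hw, hwT, hwl⟩ := exists_orthonormal_of_unit_vectors (𝕜 := 𝕜)
    (v := fun α : Σ i, κ i => v α.1 α.2) (fun α => (hv α.1).1 α.2)
    (l := fun α => l α.1 α.2) fun α => hl α.1 α.2
  refine ⟨J, w, hw, fun y => (hwT y).trans ?_, le_trans ?_ (hwl.trans_eq ?_)⟩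
  · gcongr
    exact sum_sigma_norm_inner_sq_le hT hv hTv y
  · simp only [Fintype.sum_sigma]
    gcongr with i _ a _
    · exact hl i a
    · exact overlap_sigma_le hT hv hTv i a
  · exact (sum_fiberwise univ (fun α : J => α.1.1) _).symm

end Blocks

section KetBra

open scoped InnerProductSpace MatrixOrder

variable {𝕜 n I : Type*} [RCLike 𝕜]

/-- The rank-one matrix `|x⟩⟨x|`. -/
def ketBra (x : EuclideanSpace 𝕜 n) : Matrix n n 𝕜 :=
  vecMulVec x.ofLp (star x.ofLp)

theorem isHermitian_ketBra (x : EuclideanSpace 𝕜 n) : (ketBra x).IsHermitian := by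
  simp [Matrix.IsHermitian, ketBra, conjTranspose_vecMulVec]

variable [Fintype n]

theorem ketBra_mul_ketBra (w x : EuclideanSpace 𝕜 n) :
    ketBra w * ketBra x = ⟪w, x⟫_𝕜 • vecMulVec w.ofLp (star x.ofLp) := by
  rw [ketBra, ketBra, vecMulVec_mul_vecMulVec, EuclideanSpace.inner_eq_star_dotProduct,
    dotProduct_comm x.ofLp, vecMulVec_smul]

theorem trace_ketBra (x : EuclideanSpace 𝕜 n) : (ketBra x).trace = ((‖x‖ ^ 2 : ℝ) : 𝕜) := by
  rw [ketBra, trace_vecMulVec, ← EuclideanSpace.inner_eq_star_dotProduct,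
    inner_self_eq_norm_sq_to_K]
  norm_cast

theorem trace_ketBra_mul_ketBra (w x : EuclideanSpace 𝕜 n) :
    (ketBra w * ketBra x).trace = ((‖⟪w, x⟫_𝕜‖ ^ 2 : ℝ) : 𝕜) := by
  rw [ketBra_mul_ketBra, trace_smul, trace_vecMulVec, ← EuclideanSpace.inner_eq_star_dotProduct,
    smul_eq_mul, ← inner_conj_symm x, RCLike.mul_conj]
  norm_cast

theorem trace_mul_sum_smul_ketBra [Fintype I] (A : Matrix n n 𝕜) (c : I → 𝕜)
    (v : I → EuclideanSpace 𝕜 n) :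
    (A * ∑ a, c a • ketBra (v a)).trace = ∑ a, c a * (A * ketBra (v a)).trace := by
  simp [mul_sum, trace_sum]

theorem mul_norm_inner_sq_le_trace_ketBra_mul [Fintype I] {c : I → ℝ} (hc : ∀ a, 0 ≤ c a)
    (w : EuclideanSpace 𝕜 n) (v : I → EuclideanSpace 𝕜 n) (a : I) :
    ((c a * ‖⟪w, v a⟫_𝕜‖ ^ 2 : ℝ) : 𝕜)
      ≤ (ketBra w * ∑ b, (c b : 𝕜) • ketBra (v b)).trace := by
  have h : c a * ‖⟪w, v a⟫_𝕜‖ ^ 2 ≤ ∑ b, c b * ‖⟪w, v b⟫_𝕜‖ ^ 2 :=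
    single_le_sum (f := fun b => c b * ‖⟪w, v b⟫_𝕜‖ ^ 2)
      (fun b _ => mul_nonneg (hc b) (sq_nonneg _)) (mem_univ a)
  simp only [trace_mul_sum_smul_ketBra, trace_ketBra_mul_ketBra]
  exact_mod_cast h

theorem le_of_trace_mul_ketBra_le {A B : Matrix n n 𝕜} (hA : A.IsHermitian) (hB : B.IsHermitian)
    (h : ∀ x, (A * ketBra x).trace ≤ (B * ketBra x).trace) : A ≤ B := by
  refine Matrix.le_iff.2 (PosSemidef.of_dotProduct_mulVec_nonneg (hB.sub hA) fun x => ?_)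
  have hx := sub_nonneg.2 (h (WithLp.toLp 2 x))
  rwa [← trace_sub, ← sub_mul, ketBra, mul_vecMulVec, trace_vecMulVec, dotProduct_comm] at hx

theorem isStarProjection_sum_ketBra {w : I → EuclideanSpace 𝕜 n} (hw : Orthonormal 𝕜 w)
    (s : Finset I) : IsStarProjection (∑ α ∈ s, ketBra (w α)) := by
  classical
  refine ⟨?_, isSelfAdjoint_sum _ fun α _ => isHermitian_ketBra (w α)⟩
  simp only [IsIdempotentElem, sum_mul_sum, ketBra_mul_ketBra, orthonormal_iff_ite.1 hw, ite_smul,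
    one_smul, zero_smul]
  exact sum_congr rfl fun α hα => by rw [sum_ite_eq, if_pos hα, ketBra]

theorem sum_ketBra_mul_sum_ketBra_eq_zero {w : I → EuclideanSpace 𝕜 n} (hw : Orthonormal 𝕜 w)
    {s t : Finset I} (hst : Disjoint s t) :
    (∑ α ∈ s, ketBra (w α)) * ∑ β ∈ t, ketBra (w β) = 0 := by
  rw [sum_mul_sum]
  refine sum_eq_zero fun α hα => sum_eq_zero fun β hβ => ?_
  rw [ketBra_mul_ketBra, hw.2 (disjoint_iff_ne.1 hst α hα β hβ), zero_smul]

variable [DecidableEq n]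

theorem trace_mul_ketBra_of_isStarProjection {P : Matrix n n 𝕜} (hP : IsStarProjection P)
    (x : EuclideanSpace 𝕜 n) : (P * ketBra x).trace = ((‖P.toEuclideanLin x‖ ^ 2 : ℝ) : 𝕜) := by
  have hketBra : ketBra (P.toEuclideanLin x) = P * ketBra x * P := by
    have hstar : star (P *ᵥ x.ofLp) = star x.ofLp ᵥ* P := by
      rw [star_mulVec, ← star_eq_conjTranspose, hP.isSelfAdjoint.star_eq]
    rw [ketBra, ketBra, mul_vecMulVec, vecMulVec_mul, ← hstar]
    rfl
  rw [← trace_ketBra, hketBra, trace_mul_cycle, hP.isIdempotentElem.eq]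

theorem sum_ketBra_le_nsmul_sum {ι : Type*} [Fintype ι] {P : ι → Matrix n n 𝕜}
    (hP : ∀ j, IsStarProjection (P j)) {w : I → EuclideanSpace 𝕜 n} {t : Finset I} {m : ℕ}
    (h : ∀ y, ∑ α ∈ t, ‖⟪w α, y⟫_𝕜‖ ^ 2 ≤ m * ∑ j, ‖(P j).toEuclideanLin y‖ ^ 2) :
    ∑ α ∈ t, ketBra (w α) ≤ m • ∑ j, P j := by
  have hherm : IsSelfAdjoint (m • ∑ j, P j) :=
    (IsSelfAdjoint.all m).smul (isSelfAdjoint_sum _ fun j _ => (hP j).isSelfAdjoint)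
  refine le_of_trace_mul_ketBra_le (isSelfAdjoint_sum _ fun α _ => isHermitian_ketBra (w α))
    hherm fun y => ?_
  simp only [sum_mul, smul_mul_assoc, trace_smul, trace_sum, trace_ketBra_mul_ketBra,
    trace_mul_ketBra_of_isStarProjection (hP _)]
  rw [nsmul_eq_mul]
  exact_mod_cast h y

theorem toEuclideanLin_ketBra (x y : EuclideanSpace 𝕜 n) :
    (ketBra x).toEuclideanLin y = ⟪x, y⟫_𝕜 • x := by
  ext i
  simp [ketBra, Matrix.vecMulVec_mulVec, EuclideanSpace.inner_eq_star_dotProduct, dotProduct_comm,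
    mul_comm, Matrix.toLpLin_apply]

theorem toEuclideanLin_sum_smul_ketBra_apply [Fintype I] (c : I → 𝕜) {v : I → EuclideanSpace 𝕜 n}
    (hv : Orthonormal 𝕜 v) (a : I) :
    (∑ b, c b • ketBra (v b)).toEuclideanLin (v a) = c a • v a := by
  classical
  simp [toEuclideanLin_ketBra, orthonormal_iff_ite.1 hv]

theorem toEuclideanLin_eq_self_of_mul_eq_self [Fintype I] {c : I → 𝕜}
    {v : I → EuclideanSpace 𝕜 n} (hv : Orthonormal 𝕜 v) {P : Matrix n n 𝕜}
    (hP : P * ∑ a, c a • ketBra (v a) = ∑ a, c a • ketBra (v a)) {a : I} (ha : c a ≠ 0) :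
    P.toEuclideanLin (v a) = v a := by
  have h := congrArg (fun A => Matrix.toEuclideanLin A (v a)) hP
  simp only [Matrix.toLpLin_mul_same, LinearMap.comp_apply,
    toEuclideanLin_sum_smul_ketBra_apply _ hv, map_smul] at h
  exact smul_right_injective _ ha h

end KetBra

section EigenvectorFamily

open scoped InnerProductSpace MatrixOrder

variable {𝕜 ι n : Type*} [RCLike 𝕜] [DecidableEq ι] [Fintype n]

theorem exists_eq_sum_smul_ketBra {σ : Matrix n n 𝕜} (hσ : σ.PosSemidef) :
    ∃ (s : Finset n) (c : s → ℝ) (v : s → EuclideanSpace 𝕜 n), Orthonormal 𝕜 v ∧ (∀ a, 0 < c a) ∧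
      σ = ∑ a, (c a : 𝕜) • ketBra (v a) := by
  classical
  let e := hσ.isHermitian.eigenvectorBasis
  let l := hσ.isHermitian.eigenvalues
  have hσe : σ = ∑ a, (l a : 𝕜) • ketBra (e a) := by
    refine Matrix.toEuclideanLin.injective (e.toBasis.ext fun a => ?_)
    have he : σ *ᵥ (e a).ofLp = (l a : 𝕜) • (e a).ofLp := by
      rw [hσ.isHermitian.mulVec_eigenvectorBasis, RCLike.real_smul_eq_coe_smul (K := 𝕜)]
    rw [e.coe_toBasis, toEuclideanLin_sum_smul_ketBra_apply _ e.orthonormal]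
    exact congrArg (WithLp.toLp 2) he
  refine ⟨univ.filter fun a => l a ≠ 0, fun a => l a, fun a => e a,
    e.orthonormal.comp _ Subtype.val_injective,
    fun a => (hσ.eigenvalues_nonneg a).lt_of_ne' (mem_filter.1 a.2).2, ?_⟩
  rw [sum_coe_sort _ fun a => (l a : 𝕜) • ketBra (e a), sum_filter_of_ne, ← hσe]
  rintro a - ha hla
  simp [hla] at ha

theorem sum_mul_norm_inner_sq_le_trace_sum_ketBra_mul {κ : ι → Type*} [∀ i, Fintype (κ i)]
    {c : ∀ i, κ i → ℝ} (hc : ∀ i a, 0 ≤ c i a) {J : Finset (Σ i, κ i)}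
    (w : J → EuclideanSpace 𝕜 n) (v : ∀ i, κ i → EuclideanSpace 𝕜 n) (i : ι) :
    ((∑ α : J with α.1.1 = i, c α.1.1 α.1.2 * ‖⟪w α, v α.1.1 α.1.2⟫_𝕜‖ ^ 2 : ℝ) : 𝕜)
      ≤ ((∑ α : J with α.1.1 = i, ketBra (w α)) * ∑ a, (c i a : 𝕜) • ketBra (v i a)).trace := by
  rw [sum_mul, trace_sum]
  push_cast
  refine sum_le_sum fun α hα => ?_
  obtain rfl : α.1.1 = i := (mem_filter.1 hα).2
  exact_mod_cast mul_norm_inner_sq_le_trace_ketBra_mul (hc _) (w α) _ α.1.2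

variable [Fintype ι]

theorem exists_orthogonal_isStarProjection_of_mul_eq_self {P σ : ι → Matrix n n 𝕜}
    (hP : ∀ i, IsStarProjection (P i)) (hσ : ∀ i, (σ i).PosSemidef)
    (hPσ : ∀ i, P i * σ i = σ i) :
    ∃ Q : ι → Matrix n n 𝕜, (∀ i, IsStarProjection (Q i)) ∧ (∀ i j, i ≠ j → Q i * Q j = 0) ∧
      (∀ i, Q i ≤ 2 • ∑ j, P j) ∧
      ∑ i, (σ i).trace - ∑ i, (Q i * σ i).trace
        ≤ 11 * ∑ i, ∑ j ∈ univ.erase i, (P j * σ i).trace := by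
  classical
  choose s c v hv hc hσv using fun i => exists_eq_sum_smul_ketBra (hσ i)
  have htrace : ∀ A i, (A * σ i).trace = ∑ a, (c i a : 𝕜) * (A * ketBra (v i a)).trace :=
    fun A i => by rw [hσv i, trace_mul_sum_smul_ketBra]
  have hPv : ∀ i a, (P i).toEuclideanLin (v i a) = v i a := fun i a =>
    toEuclideanLin_eq_self_of_mul_eq_self (hv i) (by rw [← hσv, hPσ])
      (RCLike.ofReal_ne_zero.2 (hc i a).ne')
  obtain ⟨J, w, hw, hwP, hwc⟩ := exists_orthonormal_sigma
    (fun i => Matrix.isSymmetric_toEuclideanLin_iff.2 (hP i).isSelfAdjoint) hv hPv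
    fun i a => (hc i a).le
  let Q : ι → Matrix n n 𝕜 := fun i => ∑ α : J with α.1.1 = i, ketBra (w α)
  refine ⟨Q, fun i => isStarProjection_sum_ketBra hw _, fun i j hij => ?_, fun i => ?_, ?_⟩
  · exact sum_ketBra_mul_sum_ketBra_eq_zero hw (disjoint_filter.2 fun α _ hi hj => hij (hi ▸ hj))
  · refine sum_ketBra_le_nsmul_sum hP fun y => le_trans ?_ (hwP y)
    exact sum_le_univ_sum_of_nonneg fun _ => sq_nonneg _
  · have hσtrace : ∑ i, (σ i).trace = ((∑ i, ∑ a, c i a : ℝ) : 𝕜) := by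
      push_cast
      refine sum_congr rfl fun i _ => ?_
      simpa [trace_ketBra, (hv i).1] using htrace 1 i
    have hPtrace : ∑ i, ∑ j ∈ univ.erase i, (P j * σ i).trace =
        ((∑ i, ∑ a, c i a * ∑ j ∈ univ.erase i, ‖(P j).toEuclideanLin (v i a)‖ ^ 2 : ℝ) : 𝕜) := by
      simp only [htrace, trace_mul_ketBra_of_isStarProjection (hP _), mul_sum]
      push_cast
      exact sum_congr rfl fun i _ => sum_comm
    have hQσ : ((∑ i, ∑ α : J with α.1.1 = i,
        c α.1.1 α.1.2 * ‖⟪w α, v α.1.1 α.1.2⟫_𝕜‖ ^ 2 : ℝ) : 𝕜) ≤ ∑ i, (Q i * σ i).trace := by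
      push_cast
      refine sum_le_sum fun i _ => ?_
      rw [hσv i]
      exact_mod_cast sum_mul_norm_inner_sq_le_trace_sum_ketBra_mul (fun i a => (hc i a).le) w v i
    rw [hσtrace, hPtrace]
    refine (sub_le_sub_left hQσ _).trans ?_
    exact_mod_cast sub_le_comm.1 hwc

end EigenvectorFamily

section Loewner

variable {R : Type*} [Ring R] [StarRing R] [PartialOrder R] [StarOrderedRing R]

theorem star_add_mul_mul_add_le {a : R} (ha : 0 ≤ a) (x y : R) :
    star (x + y) * a * (x + y) ≤ 2 • (star x * a * x + star y * a * y) := by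
  have h : 0 ≤ star (x - y) * a * (x - y) := star_left_conjugate_nonneg ha _
  rw [← sub_nonneg]
  convert h using 1
  rw [star_add, star_sub]
  noncomm_ring

theorem sub_mul_sub_le {p q : R} (hp : IsStarProjection p) (hq : IsStarProjection q) :
    (p - q) * (p - q) ≤ 2 • (p - p * q * p + (1 - p) * q * (1 - p)) := by
  have hpp := hp.isIdempotentElem.eq
  have hqq := hq.isIdempotentElem.eq
  have hsq : 0 ≤ (p - q) * (p - q) :=
    (hp.isSelfAdjoint.sub hq.isSelfAdjoint).mul_self_nonneg
  have h := star_add_mul_mul_add_le hsq p (1 - p)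
  rw [hp.isSelfAdjoint.star_eq, hp.one_sub.isSelfAdjoint.star_eq] at h
  have hdiag : p * ((p - q) * (p - q)) * p = p - p * q * p := by
    simp only [mul_sub, sub_mul, ← mul_assoc, hpp]
    simp only [mul_assoc, hpp, hqq]
    abel
  have hoff : (1 - p) * ((p - q) * (p - q)) * (1 - p) = (1 - p) * q * (1 - p) := by
    calc (1 - p) * ((p - q) * (p - q)) * (1 - p)
        = ((1 - p) * p - (1 - p) * q) * (p * (1 - p) - q * (1 - p)) := by noncomm_ring
      _ = (1 - p) * (q * q) * (1 - p) := by
          rw [hp.one_sub_mul_self, hp.mul_one_sub_self]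
          noncomm_ring
      _ = (1 - p) * q * (1 - p) := by rw [hqq]
  simpa [hdiag, hoff] using h

theorem one_sub_mul_mul_one_sub_le {ι : Type*} [Fintype ι] [DecidableEq ι] {p : ι → R} {q : R}
    (hp : ∀ i, IsStarProjection (p i)) (hq : q ≤ 2 • ∑ j, p j) (i : ι) :
    (1 - p i) * q * (1 - p i) ≤ 4 • ∑ j ∈ univ.erase i, (p j + p i * p j * p i) := by
  have hterm : ∀ j, (1 - p i) * p j * (1 - p i) ≤ 2 • (p j + p i * p j * p i) := fun j => by
    simpa [(hp i).isSelfAdjoint.star_eq, sub_eq_add_neg] using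
      star_add_mul_mul_add_le (hp j).nonneg 1 (-p i)
  calc (1 - p i) * q * (1 - p i)
      ≤ (1 - p i) * (2 • ∑ j, p j) * (1 - p i) :=
        (hp i).one_sub.isSelfAdjoint.conjugate_le_conjugate hq
    _ = 2 • ∑ j ∈ univ.erase i, (1 - p i) * p j * (1 - p i) := by
        rw [← add_sum_erase _ _ (mem_univ i), ← sum_mul, ← mul_sum, mul_smul_comm, smul_mul_assoc,
          mul_add, (hp i).one_sub_mul_self, zero_add]
    _ ≤ 2 • ∑ j ∈ univ.erase i, 2 • (p j + p i * p j * p i) :=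
        nsmul_le_nsmul_right (sum_le_sum fun j _ => hterm j) 2
    _ = 4 • ∑ j ∈ univ.erase i, (p j + p i * p j * p i) := by
        rw [sum_nsmul, smul_smul]
        norm_num

end Loewner

section Trace

open scoped MatrixOrder

variable {𝕜 ι n : Type*} [RCLike 𝕜] [Fintype n]

theorem trace_mul_mul_mul_cycle {R : Type*} [CommSemiring R] (A B C D : Matrix n n R) :
    (A * B * C * D).trace = (B * (C * D * A)).trace := by
  simpa only [mul_assoc] using trace_mul_comm A (B * C * D)

theorem trace_mul_le_trace_mul {A B ρ : Matrix n n 𝕜} (hAB : A ≤ B) (hρ : ρ.PosSemidef) :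
    (A * ρ).trace ≤ (B * ρ).trace := by
  classical
  obtain ⟨C, rfl⟩ := CStarAlgebra.nonneg_iff_eq_star_mul_self.1 hρ.nonneg
  have h := ((Matrix.le_iff.1 hAB).mul_mul_conjTranspose_same C).trace_nonneg
  rwa [← star_eq_conjTranspose, ← trace_mul_cycle, mul_assoc, sub_mul, trace_sub, sub_nonneg] at h

variable [Fintype ι] [DecidableEq ι] {P : ι → Matrix n n 𝕜}

theorem trace_sub_mul_sub_mul_le (hP : ∀ i, IsStarProjection (P i)) {Q ρ : Matrix n n 𝕜}
    (hQ : IsStarProjection Q) (hQP : Q ≤ 2 • ∑ j, P j) (hρ : ρ.PosSemidef) (i : ι) :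
    ((P i - Q) * (P i - Q) * ρ).trace
      ≤ 2 * ((P i * ρ * P i).trace - (Q * (P i * ρ * P i)).trace)
        + 8 * (∑ j ∈ univ.erase i, (P j * ρ).trace
          + ∑ j ∈ univ.erase i, (P i * P j * P i * ρ).trace) := by
  classical
  have hle : (P i - Q) * (P i - Q)
      ≤ 2 • (P i - P i * Q * P i + 4 • ∑ j ∈ univ.erase i, (P j + P i * P j * P i)) :=
    (sub_mul_sub_le (hP i) hQ).trans <|
      nsmul_le_nsmul_right (add_le_add_right (one_sub_mul_mul_one_sub_le hP hQP i) _) 2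
  have hPρ : (P i * ρ).trace = (P i * ρ * P i).trace := by
    rw [trace_mul_cycle, (hP i).isIdempotentElem.eq]
  have hPQρ : (P i * Q * P i * ρ).trace = (Q * (P i * ρ * P i)).trace :=
    trace_mul_mul_mul_cycle _ _ _ _
  refine (trace_mul_le_trace_mul hle hρ).trans_eq ?_
  simp only [smul_mul_assoc, add_mul, sub_mul, sum_mul, trace_smul, trace_add, trace_sub,
    trace_sum, hPρ, hPQρ, sum_add_distrib]
  simp only [nsmul_eq_mul]
  push_cast
  ring

end Trace

theorem robust_orthogonalization_of_projectors_general {𝕜 ι n : Type*} [RCLike 𝕜] [Fintype ι]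
    [DecidableEq ι] [Fintype n] {ρ P : ι → Matrix n n 𝕜} (hρ : ∀ i, (ρ i).PosSemidef)
    (hP : ∀ i, IsStarProjection (P i)) :
    ∃ Q : ι → Matrix n n 𝕜, (∀ i, IsStarProjection (Q i)) ∧ (∀ i j, i ≠ j → Q i * Q j = 0) ∧
      ∑ i, ((P i - Q i) * (P i - Q i) * ρ i).trace
        ≤ 30 * ∑ i, ∑ j ∈ univ.erase i, (P i * P j * P i * ρ i).trace
          + 8 * ∑ i, ∑ j ∈ univ.erase i, (P i * ρ j).trace := by
  have hPσ : ∀ i, P i * (P i * ρ i * P i) = P i * ρ i * P i := fun i => by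
    rw [← mul_assoc, ← mul_assoc, (hP i).isIdempotentElem.eq]
  have hσ : ∀ i, (P i * ρ i * P i).PosSemidef := fun i => by
    simpa [← star_eq_conjTranspose, (hP i).isSelfAdjoint.star_eq] using
      (hρ i).mul_mul_conjTranspose_same (P i)
  obtain ⟨Q, hQ, hQQ, hQP, hQσ⟩ := exists_orthogonal_isStarProjection_of_mul_eq_self hP hσ hPσ
  have htrace : ∀ i j, (P j * (P i * ρ i * P i)).trace = (P i * P j * P i * ρ i).trace :=
    fun i j => (trace_mul_mul_mul_cycle _ _ _ _).symm
  have hswap : ∑ i, ∑ j ∈ univ.erase i, (P j * ρ i).trace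
      = ∑ i, ∑ j ∈ univ.erase i, (P i * ρ j).trace := sum_comm' (by simp [eq_comm])
  refine ⟨Q, hQ, hQQ, ?_⟩
  calc ∑ i, ((P i - Q i) * (P i - Q i) * ρ i).trace
      ≤ ∑ i, (2 * ((P i * ρ i * P i).trace - (Q i * (P i * ρ i * P i)).trace)
          + 8 * (∑ j ∈ univ.erase i, (P j * ρ i).trace
            + ∑ j ∈ univ.erase i, (P i * P j * P i * ρ i).trace)) :=
        sum_le_sum fun i _ => trace_sub_mul_sub_mul_le hP (hQ i) (hQP i) (hρ i) i
    _ = 2 * (∑ i, (P i * ρ i * P i).trace - ∑ i, (Q i * (P i * ρ i * P i)).trace)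
          + 8 * (∑ i, ∑ j ∈ univ.erase i, (P i * ρ j).trace
            + ∑ i, ∑ j ∈ univ.erase i, (P i * P j * P i * ρ i).trace) := by
        rw [sum_add_distrib, ← mul_sum, ← mul_sum, sum_sub_distrib, sum_add_distrib, hswap]
    _ ≤ 2 * (11 * ∑ i, ∑ j ∈ univ.erase i, (P i * P j * P i * ρ i).trace)
          + 8 * (∑ i, ∑ j ∈ univ.erase i, (P i * ρ j).trace
            + ∑ i, ∑ j ∈ univ.erase i, (P i * P j * P i * ρ i).trace) := by
        simp only [htrace] at hQσ
        gcongr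
    _ = _ := by ring

/-- Lemma 5.2: robust orthogonalization of families of almost-orthogonal projectors.
Inequalities between traces (which are nonnegative reals here) are stated in the
standard partial order on `ℂ`. -/
theorem robust_orthogonalization_of_projectors :
    ∃ K : ℝ, 0 < K ∧
      ∀ (k n : ℕ), 0 < k → 0 < n →
      ∀ (ε : ℝ) (ρ P : Fin k → Matrix (Fin n) (Fin n) ℂ),
      (∀ i, (ρ i).PosSemidef) →
      (∀ i, (P i).IsHermitian) → (∀ i, P i * P i = P i) →
      (∑ i : Fin k, ∑ j ∈ univ.erase i, (P i * P j * P i * ρ i).trace ≤ (ε : ℂ)) →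
      (∑ i : Fin k, ∑ j ∈ univ.erase i, (P i * ρ j).trace ≤ (ε : ℂ)) →
      0 < ε → (ε : ℂ) ≤ (∑ i, ρ i).trace →
      ∃ Q : Fin k → Matrix (Fin n) (Fin n) ℂ,
        (∀ i, (Q i).IsHermitian) ∧ (∀ i, Q i * Q i = Q i) ∧
        (∀ i j, i ≠ j → Q i * Q j = 0) ∧
        ∑ i : Fin k, ((P i - Q i) * (P i - Q i) * ρ i).trace ≤
          ((K * Real.sqrt ε * Real.sqrt ((∑ i, ρ i).trace.re) : ℝ) : ℂ) := by
  refine ⟨38, by norm_num, fun k n _ _ ε ρ P hρ hP hPP h₁ h₂ hε hερ => ?_⟩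
  obtain ⟨Q, hQ, hQQ, hQρ⟩ :=
    robust_orthogonalization_of_projectors_general hρ fun i => ⟨hPP i, hP i⟩
  refine ⟨Q, fun i => (hQ i).isSelfAdjoint, fun i => (hQ i).isIdempotentElem, hQQ, ?_⟩
  have hsqrt : ε ≤ √ε * √(∑ i, ρ i).trace.re :=
    calc ε = √ε * √ε := (Real.mul_self_sqrt hε.le).symm
      _ ≤ √ε * √(∑ i, ρ i).trace.re := by
        gcongr
        exact (Complex.le_def.1 hερ).1
  have hbound : 30 * ε + 8 * ε ≤ 38 * √ε * √(∑ i, ρ i).trace.re := by linarith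
  calc ∑ i, ((P i - Q i) * (P i - Q i) * ρ i).trace ≤ 30 * (ε : ℂ) + 8 * (ε : ℂ) :=
        hQρ.trans (by gcongr)
    _ ≤ _ := by exact_mod_cast hbound
end

section
/- Let A and ρ be n×n positive semidefinite complex matrices and let Π be an n×n orthogonal projection. Set a := Tr(Aρ) and c := Tr((I−Π)A(I−Π)ρ); both a and c are nonnegative reals. Then Tr(ΠAΠρ) ≤ (√a + √c)² ≤ 2(a + c). -/
/-!
For positive semidefinite `A` and `ρ`, the form `⟪X, Y⟫ = Tr(Xᴴ A Y ρ)` is a semi-inner product,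
so `X ↦ √Tr(Xᴴ A X ρ)` is a seminorm. The first inequality is its triangle inequality for
`Π = I - (I - Π)`, squared.
-/

open Matrix
open scoped ComplexOrder

lemma sq_sqrt_add_sqrt_le {x y : ℝ} (hx : 0 ≤ x) (hy : 0 ≤ y) :
    (√x + √y) ^ 2 ≤ 2 * (x + y) := by
  simpa only [Real.sq_sqrt hx, Real.sq_sqrt hy] using add_sq_le (a := √x) (b := √y)

section

variable {𝕜 m n : Type*} [RCLike 𝕜] [Fintype m] [Fintype n]

open scoped MatrixOrder in
lemma trace_mul_nonneg_of_posSemidef {A ρ : Matrix n n 𝕜}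
    (hA : A.PosSemidef) (hρ : ρ.PosSemidef) : 0 ≤ (A * ρ).trace := by
  classical
  obtain ⟨C, rfl⟩ := CStarAlgebra.nonneg_iff_eq_star_mul_self.mp hρ.nonneg
  rw [star_eq_conjTranspose, ← Matrix.mul_assoc, trace_mul_cycle]
  exact (hA.mul_mul_conjTranspose_same C).trace_nonneg

lemma trace_conjTranspose_mul_mul_mul_nonneg {A : Matrix m m 𝕜} {ρ : Matrix n n 𝕜}
    (hA : A.PosSemidef) (hρ : ρ.PosSemidef) (X : Matrix m n 𝕜) :
    0 ≤ (Xᴴ * A * X * ρ).trace :=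
  trace_mul_nonneg_of_posSemidef (hA.conjTranspose_mul_mul_same X) hρ

/-- The Hilbert–Schmidt form `⟪X, Y⟫ = Tr(Xᴴ A Y ρ)` weighted by positive semidefinite `A` and `ρ`,
a possibly degenerate inner product on rectangular matrices. It is not an instance, since it
depends on the weights. -/
abbrev weightedTraceCore {A : Matrix m m 𝕜} {ρ : Matrix n n 𝕜}
    (hA : A.PosSemidef) (hρ : ρ.PosSemidef) : PreInnerProductSpace.Core 𝕜 (Matrix m n 𝕜) where
  inner X Y := (Xᴴ * A * Y * ρ).trace
  conj_inner_symm X Y := by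
    rw [starRingEnd_apply, ← trace_conjTranspose]
    simp only [conjTranspose_mul, conjTranspose_conjTranspose, hA.isHermitian.eq,
      hρ.isHermitian.eq]
    rw [trace_mul_comm]
    simp only [Matrix.mul_assoc]
  re_inner_nonneg X :=
    (RCLike.nonneg_iff.mp (trace_conjTranspose_mul_mul_mul_nonneg hA hρ X)).1
  add_left X Y Z := by simp only [conjTranspose_add, Matrix.add_mul, trace_add]
  smul_left X Y c := by
    simp only [conjTranspose_smul, Matrix.smul_mul, trace_smul, smul_eq_mul, starRingEnd_apply]

lemma sqrt_re_trace_conjTranspose_mul_mul_mul_sub_le {A : Matrix m m 𝕜} {ρ : Matrix n n 𝕜}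
    (hA : A.PosSemidef) (hρ : ρ.PosSemidef) (X Y : Matrix m n 𝕜) :
    √(RCLike.re ((X - Y)ᴴ * A * (X - Y) * ρ).trace) ≤
      √(RCLike.re (Xᴴ * A * X * ρ).trace) + √(RCLike.re (Yᴴ * A * Y * ρ).trace) :=
  letI := weightedTraceCore hA hρ
  letI := InnerProductSpace.Core.toSeminormedAddCommGroup (𝕜 := 𝕜) (F := Matrix m n 𝕜)
  norm_sub_le X Y

theorem posblocks_first_general [DecidableEq n] {A ρ : Matrix n n 𝕜}
    (hA : A.PosSemidef) (hρ : ρ.PosSemidef) (X : Matrix n n 𝕜) :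
    (Xᴴ * A * X * ρ).trace ≤
      (((√(RCLike.re (A * ρ).trace) +
          √(RCLike.re ((1 - X)ᴴ * A * (1 - X) * ρ).trace)) ^ 2 : ℝ) : 𝕜) ∧
    (√(RCLike.re (A * ρ).trace) + √(RCLike.re ((1 - X)ᴴ * A * (1 - X) * ρ).trace)) ^ 2 ≤
      2 * (RCLike.re (A * ρ).trace + RCLike.re ((1 - X)ᴴ * A * (1 - X) * ρ).trace) := by
  have trace_nonneg : 0 ≤ RCLike.re (A * ρ).trace :=
    (RCLike.nonneg_iff.mp (trace_mul_nonneg_of_posSemidef hA hρ)).1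
  have compl_compression_nonneg : 0 ≤ RCLike.re ((1 - X)ᴴ * A * (1 - X) * ρ).trace :=
    (RCLike.nonneg_iff.mp (trace_conjTranspose_mul_mul_mul_nonneg hA hρ (1 - X))).1
  have triangle : √(RCLike.re (Xᴴ * A * X * ρ).trace) ≤
      √(RCLike.re (A * ρ).trace) + √(RCLike.re ((1 - X)ᴴ * A * (1 - X) * ρ).trace) := by
    simpa only [sub_sub_cancel, conjTranspose_one, Matrix.one_mul, Matrix.mul_one] using
      sqrt_re_trace_conjTranspose_mul_mul_mul_sub_le hA hρ 1 (1 - X)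
  constructor
  · have compression_nonneg := trace_conjTranspose_mul_mul_mul_nonneg hA hρ X
    rw [← RCLike.conj_eq_iff_re.mp compression_nonneg.isSelfAdjoint, RCLike.ofReal_le_ofReal]
    exact (Real.sqrt_le_left (by positivity)).mp triangle
  · exact sq_sqrt_add_sqrt_le trace_nonneg compl_compression_nonneg

end

/-- First inequality of Fact `posblocks`: for `A, ρ ⪰ 0` and an orthogonal projection `Π`,
writing `a = Tr(Aρ)` and `c = Tr((I−Π)A(I−Π)ρ)` (both nonnegative reals),
we have `Tr(ΠAΠρ) ≤ (√a + √c)² ≤ 2(a + c)`. -/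
theorem posblocks_first (n : ℕ) (A ρ Pm : Matrix (Fin n) (Fin n) ℂ)
    (hA : A.PosSemidef) (hρ : ρ.PosSemidef)
    (hPm : Pm.IsHermitian) (hPm2 : Pm * Pm = Pm) :
    (Pm * A * Pm * ρ).trace ≤
      (((Real.sqrt ((A * ρ).trace.re) +
          Real.sqrt (((1 - Pm) * A * (1 - Pm) * ρ).trace.re)) ^ 2 : ℝ) : ℂ) ∧
    (Real.sqrt ((A * ρ).trace.re) +
        Real.sqrt (((1 - Pm) * A * (1 - Pm) * ρ).trace.re)) ^ 2 ≤
      2 * ((A * ρ).trace.re + ((1 - Pm) * A * (1 - Pm) * ρ).trace.re) := by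
  simpa only [conjTranspose_sub, conjTranspose_one, hPm.eq, RCLike.re_eq_complex_re,
    Complex.coe_algebraMap] using posblocks_first_general hA hρ Pm
end

section
/- There exist universal constants c > 0 and K > 0 such that the following holds for all positive integers k, m, n. Let ρ_1, …, ρ_k and ρ be m×m positive semidefinite complex matrices with ∑_{i=1}^k ρ_i ≤ ρ in the Loewner order, let Ŷ_1, …, Ŷ_k be n×m complex matrices with ∑_{i=1}^k Ŷ_i Ŷ_iᴴ ≤ I_n, and let α > 0 satisfy ∑_{i≠j} Tr(Ŷ_iᴴ (Ŷ_j Ŷ_jᴴ) Ŷ_i ρ_i) ≤ α · Tr(ρ). Then there exist n×n orthogonal projections Π_1, …, Π_k with Π_i Π_j = 0 for all i ≠ j, such that ∑_{i=1}^k Tr(Ŷ_iᴴ (I_n − Π_i) Ŷ_i ρ_i) ≤ K · α^c · Tr(ρ). -/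
open Matrix Finset
open scoped ComplexOrder

/-! Write `C i = ∑ j ≠ i, Y j * (Y j)ᴴ`. Two spectral cuts, of `(Y i)ᴴ * C i * Y i` on the right
and of `Y i * (Y i)ᴴ` on the left, replace `Y i` by some `Z i` supported on a projection `P i` with
`δ • P i ≤ Y i * (Y i)ᴴ` and `P i * C i * P i` small, so that the `P i` are almost orthogonal.
Consequently the eigenvectors of all the states `Z i * ρ i * (Z i)ᴴ`, side by side in a matrix `R`,
are almost orthonormal: the rows of `Rᴴ * R - 1` have squared norm at most `δ`.

There may be more columns than dimensions, but only by a fraction `δ`, because `R * Rᴴ` and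
`Rᴴ * R` have the same nonzero spectrum; dropping the lightest ones costs a fraction `δ` of the
mass. The isometric polar factor `W` of the rest satisfies `|R - W|² ≤ (Rᴴ * R - 1)²`, hence each
column moves by at most `δ` in squared norm, and the spans of the columns of `W` coming from
different `i` are orthogonal.
-/

namespace Orthogonalization

open scoped MatrixOrder

variable {𝕜 ι κ m n : Type*} [RCLike 𝕜]

section Loewner

lemma re_diag_mono {A B : Matrix n n 𝕜} (h : A ≤ B) (a : n) :
    RCLike.re (A.diag a) ≤ RCLike.re (B.diag a) := by
  have h_sub := (RCLike.nonneg_iff.1 ((Matrix.le_iff.1 h).diag_nonneg (i := a))).1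
  rwa [Matrix.sub_apply, map_sub, sub_nonneg] at h_sub

variable [Fintype n]

lemma conjTranspose_mul_mul_mono [Finite m] {A B : Matrix n n 𝕜} (h : A ≤ B) (T : Matrix n m 𝕜) :
    Tᴴ * A * T ≤ Tᴴ * B * T := by
  rw [Matrix.le_iff] at h ⊢
  simpa only [Matrix.mul_sub, Matrix.sub_mul] using h.conjTranspose_mul_mul_same T

lemma mul_mul_conjTranspose_mono [Finite m] {A B : Matrix n n 𝕜} (h : A ≤ B) (T : Matrix m n 𝕜) :
    T * A * Tᴴ ≤ T * B * Tᴴ := by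
  simpa only [conjTranspose_conjTranspose] using conjTranspose_mul_mul_mono h Tᴴ

lemma mul_conjTranspose_self_nonneg [Finite m] (T : Matrix m n 𝕜) : 0 ≤ T * Tᴴ :=
  Matrix.nonneg_iff_posSemidef.2 (posSemidef_self_mul_conjTranspose T)

lemma conjTranspose_mul_mul_add_le [Finite m] {A : Matrix n n 𝕜} (hA : 0 ≤ A)
    (S T : Matrix n m 𝕜) :
    (S + T)ᴴ * A * (S + T) ≤ (2 : ℝ) • (Sᴴ * A * S) + (2 : ℝ) • (Tᴴ * A * T) := by
  have h_diff : 0 ≤ (S - T)ᴴ * A * (S - T) := by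
    simpa using conjTranspose_mul_mul_mono hA (S - T)
  rw [← sub_nonneg]
  convert h_diff using 1
  simp only [conjTranspose_add, conjTranspose_sub, Matrix.mul_add, Matrix.add_mul, Matrix.mul_sub,
    Matrix.sub_mul, two_smul]
  abel

variable [DecidableEq n]

lemma mul_conjTranspose_le_of_conjTranspose_mul_le [Fintype m] [DecidableEq m] {T : Matrix n m 𝕜}
    {t : ℝ} (ht : 0 < t) (h : Tᴴ * T ≤ t • (1 : Matrix m m 𝕜)) :
    T * Tᴴ ≤ t • (1 : Matrix n n 𝕜) := by
  have h_sq : 0 ≤ (t • (1 : Matrix n n 𝕜) - T * Tᴴ) * (t • (1 : Matrix n n 𝕜) - T * Tᴴ) :=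
    IsSelfAdjoint.mul_self_nonneg (by
      simp [IsSelfAdjoint, star_eq_conjTranspose])
  have h_conj := sub_nonneg.2 (mul_mul_conjTranspose_mono h T)
  have h_smul : 0 ≤ t • (t • (1 : Matrix n n 𝕜) - T * Tᴴ) := by
    convert add_nonneg h_sq h_conj using 1
    simp only [Matrix.mul_sub, Matrix.sub_mul, Matrix.mul_smul, Matrix.smul_mul, Matrix.mul_one,
      Matrix.one_mul, Matrix.mul_assoc, smul_sub]
    abel
  have h_inv := smul_nonneg (inv_nonneg.2 ht.le) h_smul
  rwa [inv_smul_smul₀ ht.ne', sub_nonneg] at h_inv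

lemma mul_conjTranspose_le_one_of_isometry [Fintype m] [DecidableEq m] {T : Matrix n m 𝕜}
    (h : Tᴴ * T = 1) : T * Tᴴ ≤ 1 := by
  simpa only [one_smul] using
    mul_conjTranspose_le_of_conjTranspose_mul_le (T := T) one_pos (by rw [h, one_smul])

lemma mul_mul_le_of_smul_le {B C Q : Matrix n n 𝕜} (hQ : Q.IsHermitian) {β δ : ℝ} (hδ : 0 < δ)
    (hBC : δ • B ≤ C) (hC : Q * C * Q ≤ β • (1 : Matrix n n 𝕜)) :
    Q * B * Q ≤ (β / δ) • (1 : Matrix n n 𝕜) := by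
  have h_conj := conjTranspose_mul_mul_mono hBC Q
  rw [hQ.eq, Matrix.mul_smul, Matrix.smul_mul] at h_conj
  rw [div_eq_inv_mul, mul_smul]
  exact (le_inv_smul_iff_of_pos hδ).2 (h_conj.trans hC)

lemma exists_isStarProjection_spectral_cut {A : Matrix n n 𝕜} (hA : 0 ≤ A) {t : ℝ} (ht : 0 ≤ t) :
    ∃ Q : Matrix n n 𝕜, IsStarProjection Q ∧ Q * A * Q ≤ t • (1 : Matrix n n 𝕜) ∧
      t • (1 - Q) ≤ A := by
  have h_cont (f : ℝ → ℝ) : ContinuousOn f (spectrum ℝ A) := A.finite_real_spectrum.continuousOn f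
  have hA_sa : IsSelfAdjoint A := .of_nonneg hA
  have h_nonneg : ∀ x ∈ spectrum ℝ A, 0 ≤ x := fun x hx ↦ spectrum_nonneg_of_nonneg hA hx
  set f : ℝ → ℝ := Set.indicator (Set.Iic t) 1 with hf
  refine ⟨cfc f A, ⟨?_, cfc_predicate f A⟩, ?_, ?_⟩
  · rw [IsIdempotentElem, ← cfc_mul f f A (h_cont _) (h_cont _)]
    congr 1
    ext x
    by_cases hx : x ≤ t <;> simp [hf, hx]
  · nth_rw 2 [← cfc_id ℝ A]
    rw [← cfc_mul f id A (h_cont _) (h_cont _), ← cfc_mul _ f A (h_cont _) (h_cont _),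
      ← Algebra.algebraMap_eq_smul_one]
    refine cfc_le_algebraMap _ t A (fun x _ ↦ ?_) (h_cont _)
    by_cases hx : x ≤ t <;> simp [hf, hx, ht]
  · nth_rw 2 [← cfc_id ℝ A]
    rw [← cfc_one ℝ A, ← cfc_sub _ f A (h_cont _) (h_cont _), ← cfc_const_mul t _ A (h_cont _)]
    refine cfc_mono (fun x hx ↦ ?_) (h_cont _) (h_cont _)
    by_cases hxt : x ≤ t
    · simpa [hf, hxt] using h_nonneg x hx
    · simpa [hf, hxt] using (not_le.1 hxt).le

lemma exists_eq_mul_diagonal_mul_conjTranspose {X : Matrix n n 𝕜} (hX : 0 ≤ X) :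
    ∃ (s : Finset n) (V : Matrix n s 𝕜) (x : s → ℝ), (∀ a, 0 < x a) ∧ Vᴴ * V = 1 ∧
      X = V * diagonal (fun a ↦ (x a : 𝕜)) * Vᴴ := by
  have hX' := Matrix.nonneg_iff_posSemidef.1 hX
  obtain ⟨U, d, hU, hd, rfl⟩ : ∃ (U : Matrix n n 𝕜) (d : n → ℝ), Uᴴ * U = 1 ∧ (∀ a, 0 ≤ d a) ∧
      X = U * diagonal (fun a ↦ (d a : 𝕜)) * Uᴴ :=
    ⟨_, _, Unitary.coe_star_mul_self hX'.isHermitian.eigenvectorUnitary, hX'.eigenvalues_nonneg,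
      hX'.isHermitian.spectral_theorem⟩
  refine ⟨univ.filter (0 < d ·), U.submatrix id (↑), fun a ↦ d a, fun a ↦ (mem_filter.1 a.2).2,
    ?_, ?_⟩
  · rw [conjTranspose_submatrix, ← submatrix_mul _ _ _ id _ Function.bijective_id, hU,
      submatrix_one _ Subtype.val_injective]
  · ext r q
    rw [mul_apply, mul_apply]
    simp only [mul_diagonal, conjTranspose_apply, submatrix_apply, id_eq]
    rw [sum_coe_sort _ fun a ↦ U r a * (d a : 𝕜) * star (U q a)]
    refine (sum_subset (filter_subset _ _) fun a _ ha ↦ ?_).symm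
    have h_zero : d a = 0 := le_antisymm (by simpa using ha) (hd a)
    rw [h_zero, RCLike.ofReal_zero, mul_zero, zero_mul]

end Loewner

section Compression

variable [Fintype n]

lemma conjTranspose_mul_self_submatrix_one [DecidableEq n] [DecidableEq κ] {f : κ → n}
    (hf : Function.Injective f) :
    ((1 : Matrix n n 𝕜).submatrix id f)ᴴ * (1 : Matrix n n 𝕜).submatrix id f = 1 := by
  rw [conjTranspose_submatrix, conjTranspose_one, ← submatrix_mul _ _ f id f Function.bijective_id,
    Matrix.mul_one, submatrix_one f hf]

lemma submatrix_mul_submatrix_le [Fintype κ] {M : Matrix n n 𝕜} (hM : M.IsHermitian)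
    {f : κ → n} (hf : Function.Injective f) :
    M.submatrix f f * M.submatrix f f ≤ (M * M).submatrix f f := by
  classical
  set J := (1 : Matrix n n 𝕜).submatrix id f
  have hJ : J * Jᴴ ≤ 1 :=
    mul_conjTranspose_le_one_of_isometry (conjTranspose_mul_self_submatrix_one hf)
  have h_comp (A : Matrix n n 𝕜) : A.submatrix f f = Jᴴ * A * J := by
    ext a b
    simp [J, mul_apply, one_apply]
  calc M.submatrix f f * M.submatrix f f = (M * J)ᴴ * (J * Jᴴ) * (M * J) := by
        simp only [h_comp, conjTranspose_mul, hM.eq, Matrix.mul_assoc]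
    _ ≤ (M * J)ᴴ * 1 * (M * J) := conjTranspose_mul_mul_mono hJ _
    _ = (M * M).submatrix f f := by
        simp only [h_comp, conjTranspose_mul, hM.eq, Matrix.mul_assoc, Matrix.one_mul]

end Compression

section NearbyIsometry

lemma exists_linearIsometry_comp_eq {E F : Type*} [AddCommGroup E] [Module 𝕜 E]
    [NormedAddCommGroup F] [InnerProductSpace 𝕜 F] [FiniteDimensional 𝕜 F] {A B : E →ₗ[𝕜] F}
    (h : ∀ x, ‖A x‖ = ‖B x‖) : ∃ L : F →ₗᵢ[𝕜] F, ∀ x, L (A x) = B x := by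
  obtain ⟨g, hg⟩ := A.rangeRestrict.exists_rightInverse_of_surjective A.range_rangeRestrict
  have hg_apply (y : A.range) : A (g y) = y := congrArg Subtype.val (LinearMap.congr_fun hg y)
  let L₀ : A.range →ₗᵢ[𝕜] F := ⟨B ∘ₗ g, fun y ↦ by
    rw [LinearMap.comp_apply, ← h, hg_apply, Submodule.coe_norm]⟩
  refine ⟨L₀.extend, fun x ↦ ?_⟩
  have h_sub : ‖B (g (A.rangeRestrict x) - x)‖ = 0 := by
    rw [← h, map_sub, hg_apply]
    exact norm_eq_zero.2 (sub_self (A x))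
  rw [norm_eq_zero, map_sub, sub_eq_zero] at h_sub
  exact (L₀.extend_apply (A.rangeRestrict x)).trans h_sub

variable [Fintype n]

lemma exists_isometry_mul_eq [DecidableEq n] [Finite κ] {A B : Matrix n κ 𝕜} (h : Aᴴ * A = Bᴴ * B) :
    ∃ U : Matrix n n 𝕜, Uᴴ * U = 1 ∧ U * A = B := by
  classical
  cases nonempty_fintype κ
  have h_norm (T : Matrix n κ 𝕜) (x : EuclideanSpace 𝕜 κ) :
      (‖toLpLin 2 2 T x‖ ^ 2 : 𝕜) = star x.ofLp ⬝ᵥ (Tᴴ * T) *ᵥ x.ofLp := by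
    rw [← inner_self_eq_norm_sq_to_K (𝕜 := 𝕜), EuclideanSpace.inner_eq_star_dotProduct,
      toLpLin_apply, dotProduct_comm, star_mulVec, ← dotProduct_mulVec, mulVec_mulVec]
  obtain ⟨L, hL⟩ := exists_linearIsometry_comp_eq (A := toLpLin 2 2 A) (B := toLpLin 2 2 B)
    fun x ↦ by
      have h_sq := (h_norm A x).trans (h ▸ (h_norm B x).symm)
      exact (sq_eq_sq₀ (norm_nonneg _) (norm_nonneg _)).1 (by exact_mod_cast h_sq)
  refine ⟨(toEuclideanCLM (n := n) (𝕜 := 𝕜)).symm L.toContinuousLinearMap, ?_, ?_⟩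
  · apply EquivLike.injective (toEuclideanCLM (n := n) (𝕜 := 𝕜))
    rw [← star_eq_conjTranspose, map_mul, map_star, StarAlgEquiv.apply_symm_apply, map_one]
    exact (ContinuousLinearMap.norm_map_iff_adjoint_comp_self _).1 L.norm_map
  · refine ext_of_mulVec_single fun e ↦ ?_
    rw [← mulVec_mulVec, ← ofLp_toEuclideanCLM, StarAlgEquiv.apply_symm_apply]
    exact congrArg WithLp.ofLp (hL (WithLp.toLp 2 (Pi.single e 1)))

variable [Fintype κ] [DecidableEq κ]

-- `W` is the isometric factor in the polar decomposition of `R`.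
lemma exists_isometry_sub_conjTranspose_mul_le (R : Matrix n κ 𝕜)
    (h_card : Fintype.card κ ≤ Fintype.card n) :
    ∃ W : Matrix n κ 𝕜, Wᴴ * W = 1 ∧
      (R - W)ᴴ * (R - W) ≤ (Rᴴ * R - 1) * (Rᴴ * R - 1) := by
  classical
  obtain ⟨f⟩ := Function.Embedding.nonempty_of_card_le h_card
  set J := (1 : Matrix n n 𝕜).submatrix id f
  have hJ : Jᴴ * J = 1 := conjTranspose_mul_self_submatrix_one f.injective
  have hG : 0 ≤ Rᴴ * R := (posSemidef_conjTranspose_mul_self R).nonneg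
  set S := CFC.sqrt (Rᴴ * R)
  have hS : 0 ≤ S := CFC.sqrt_nonneg _
  have hS_sq : S * S = Rᴴ * R := CFC.sqrt_mul_sqrt_self _ hG
  have hS_star : Sᴴ = S := (IsSelfAdjoint.of_nonneg hS).star_eq
  obtain ⟨U, hU, hUR⟩ := exists_isometry_mul_eq (A := J * S) (B := R) (by
    rw [conjTranspose_mul, Matrix.mul_assoc, ← Matrix.mul_assoc Jᴴ, hJ, Matrix.one_mul, hS_star,
      hS_sq])
  have hW : (U * J)ᴴ * (U * J) = 1 := by
    rw [conjTranspose_mul, Matrix.mul_assoc, ← Matrix.mul_assoc Uᴴ, hU, Matrix.one_mul, hJ]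
  refine ⟨U * J, hW, ?_⟩
  have h_sub : R - U * J = U * J * (S - 1) := by
    rw [Matrix.mul_sub, Matrix.mul_one, Matrix.mul_assoc, hUR]
  have h_star : star (S - 1) = S - 1 := by
    rw [star_sub, star_one, star_eq_conjTranspose, hS_star]
  have h_gap : 0 ≤ star (S - 1) * (S * S + S + S) * (S - 1) :=
    star_left_conjugate_nonneg
      (add_nonneg (add_nonneg (hS_sq ▸ hG) hS) hS) (S - 1)
  rw [h_star] at h_gap
  rw [h_sub, conjTranspose_mul, Matrix.mul_assoc, ← Matrix.mul_assoc (U * J)ᴴ, hW, Matrix.one_mul,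
    ← star_eq_conjTranspose, h_star, ← hS_sq, ← sub_nonneg]
  convert h_gap using 1
  noncomm_ring

lemma card_le_card_add_re_trace (R : Matrix n κ 𝕜) :
    (Fintype.card κ : ℝ) ≤
      Fintype.card n + RCLike.re ((Rᴴ * R - 1) * (Rᴴ * R - 1)).trace := by
  classical
  have h_nonneg : 0 ≤ RCLike.re ((R * Rᴴ - 1)ᴴ * (R * Rᴴ - 1)).trace :=
    (RCLike.nonneg_iff.1 (posSemidef_conjTranspose_mul_self _).trace_nonneg).1
  have h_cycle : (R * Rᴴ * (R * Rᴴ)).trace = (Rᴴ * R * (Rᴴ * R)).trace := by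
    rw [Matrix.mul_assoc, trace_mul_comm, Matrix.mul_assoc, Matrix.mul_assoc, Matrix.mul_assoc]
  simp only [conjTranspose_sub, conjTranspose_mul, conjTranspose_conjTranspose, conjTranspose_one,
    Matrix.sub_mul, Matrix.mul_sub, Matrix.mul_one, Matrix.one_mul, trace_sub, trace_one, map_sub,
    h_cycle, trace_mul_comm R, RCLike.natCast_re] at h_nonneg ⊢
  linarith

end NearbyIsometry

section Selection

variable [Fintype κ]

lemma exists_card_eq_and_card_mul_sum_le (x : κ → ℝ) {r : ℕ} (hr : r ≤ Fintype.card κ) :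
    ∃ T : Finset κ, #T = r ∧ (Fintype.card κ : ℝ) * ∑ e ∈ T, x e ≤ r * ∑ e, x e := by
  classical
  induction r with
  | zero => exact ⟨∅, by simp⟩
  | succ r ih =>
    obtain ⟨T, hT, h_le⟩ := ih (Nat.le_of_succ_le hr)
    have h_compl : (#Tᶜ : ℝ) = Fintype.card κ - r := by
      rw [card_compl, hT, Nat.cast_sub (Nat.le_of_succ_le hr)]
    have h_one : (1 : ℝ) ≤ Fintype.card κ - r := by
      rw [le_sub_iff_add_le']
      exact_mod_cast hr
    obtain ⟨e, he, h_min⟩ := exists_min_image Tᶜ x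
      (card_pos.1 (Nat.cast_pos.1 (h_compl ▸ zero_lt_one.trans_le h_one)))
    refine ⟨insert e T, by rw [card_insert_of_notMem (mem_compl.1 he), hT], ?_⟩
    have h_light : (Fintype.card κ - r : ℝ) * x e ≤ ∑ e, x e - ∑ e ∈ T, x e := by
      rw [← h_compl, ← nsmul_eq_mul, ← sum_add_sum_compl T x, add_sub_cancel_left]
      exact card_nsmul_le_sum _ _ _ h_min
    rw [sum_insert (mem_compl.1 he), Nat.cast_succ]
    refine le_of_mul_le_mul_left ?_ (zero_lt_one.trans_le h_one)
    linarith [mul_le_mul_of_nonneg_left h_light (Nat.cast_nonneg (α := ℝ) (Fintype.card κ)),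
      mul_le_mul_of_nonneg_left h_le (sub_nonneg.2 h_one)]

variable [DecidableEq κ]

lemma exists_card_le_and_sum_compl_le {x : κ → ℝ} (hx : ∀ e, 0 ≤ x e) {γ : ℝ} (hγ : 0 ≤ γ) {N : ℕ}
    (h_card : (Fintype.card κ : ℝ) ≤ N + γ * Fintype.card κ) :
    ∃ S : Finset κ, #S ≤ N ∧ ∑ e ∈ Sᶜ, x e ≤ γ * ∑ e, x e := by
  have hx_sum : 0 ≤ ∑ e, x e := sum_nonneg fun e _ ↦ hx e
  rcases le_or_gt (Fintype.card κ) N with h_le | h_lt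
  · exact ⟨univ, h_le, by simpa using mul_nonneg hγ hx_sum⟩
  obtain ⟨T, hT, h_sum⟩ := exists_card_eq_and_card_mul_sum_le x (Nat.sub_le (Fintype.card κ) N)
  refine ⟨Tᶜ, by rw [card_compl, hT, Nat.sub_sub_self h_lt.le], ?_⟩
  rw [compl_compl]
  rw [Nat.cast_sub h_lt.le] at h_sum
  refine le_of_mul_le_mul_left (h_sum.trans ?_) (Nat.cast_pos.2 (Nat.zero_lt_of_lt h_lt))
  linarith [mul_le_mul_of_nonneg_right (sub_le_iff_le_add'.2 h_card) hx_sum]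

lemma sum_mul_le_of_le_of_sum_compl_le {x y : κ → ℝ} (hx : ∀ e, 0 ≤ x e) {γ : ℝ} (hγ : 0 ≤ γ)
    {S : Finset κ} (h_mem : ∀ e ∈ S, y e ≤ γ) (h_one : ∀ e, y e ≤ 1)
    (h_compl : ∑ e ∈ Sᶜ, x e ≤ γ * ∑ e, x e) :
    ∑ e, x e * y e ≤ 2 * γ * ∑ e, x e := by
  have h_sum_mem : ∑ e ∈ S, x e * y e ≤ ∑ e ∈ S, x e * γ :=
    sum_le_sum fun e he ↦ mul_le_mul_of_nonneg_left (h_mem e he) (hx e)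
  have h_sum_compl : ∑ e ∈ Sᶜ, x e * y e ≤ ∑ e ∈ Sᶜ, x e :=
    sum_le_sum fun e _ ↦ mul_le_of_le_one_right (hx e) (h_one e)
  have h_subset : ∑ e ∈ S, x e ≤ ∑ e, x e :=
    sum_le_sum_of_subset_of_nonneg (subset_univ S) fun e _ _ ↦ hx e
  rw [← sum_mul] at h_sum_mem
  rw [← sum_add_sum_compl S fun e ↦ x e * y e]
  linarith [mul_le_mul_of_nonneg_right h_subset hγ]

end Selection

section Sectors

variable [Fintype n]

lemma isStarProjection_mul_conjTranspose [Fintype κ] [DecidableEq κ] {V : Matrix n κ 𝕜}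
    (hV : Vᴴ * V = 1) : IsStarProjection (V * Vᴴ) where
  isIdempotentElem := by
    rw [IsIdempotentElem, Matrix.mul_assoc, ← Matrix.mul_assoc Vᴴ, hV, Matrix.one_mul]
  isSelfAdjoint := isHermitian_mul_conjTranspose_self V

/-- The submatrix of the columns of `T` that `l` labels by `i`; the label of an eigenvector records
the state it comes from. -/
def sector (T : Matrix n κ 𝕜) (l : κ → ι) (i : ι) : Matrix n {e // l e = i} 𝕜 :=
  T.submatrix id (↑)

lemma conjTranspose_sector_mul_sector [DecidableEq κ] {W : Matrix n κ 𝕜} (hW : Wᴴ * W = 1)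
    (l : κ → ι) (i : ι) : (sector W l i)ᴴ * sector W l i = 1 := by
  rw [sector, conjTranspose_submatrix, ← submatrix_mul _ _ _ id _ Function.bijective_id, hW,
    submatrix_one _ Subtype.val_injective]

lemma conjTranspose_sector_mul_sector_of_ne [DecidableEq κ] {W : Matrix n κ 𝕜} (hW : Wᴴ * W = 1)
    (l : κ → ι) {i j : ι} (hij : i ≠ j) : (sector W l i)ᴴ * sector W l j = 0 := by
  rw [sector, sector, conjTranspose_submatrix, ← submatrix_mul _ _ _ id _ Function.bijective_id, hW]
  ext a b
  exact one_apply_ne fun h_eq ↦ hij (by rw [← a.2, ← b.2, h_eq])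

variable [Fintype κ] [DecidableEq κ] [DecidableEq ι]

/-- For an isometry `W`, the projection onto the span of its columns labelled by `i`; these are the
pairwise orthogonal projections to be constructed. -/
def sectorProjection (W : Matrix n κ 𝕜) (l : κ → ι) (i : ι) : Matrix n n 𝕜 :=
  sector W l i * (sector W l i)ᴴ

lemma isStarProjection_sectorProjection {W : Matrix n κ 𝕜} (hW : Wᴴ * W = 1) (l : κ → ι) (i : ι) :
    IsStarProjection (sectorProjection W l i) :=
  isStarProjection_mul_conjTranspose (conjTranspose_sector_mul_sector hW l i)

lemma sectorProjection_mul_sectorProjection {W : Matrix n κ 𝕜} (hW : Wᴴ * W = 1) (l : κ → ι)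
    {i j : ι} (hij : i ≠ j) : sectorProjection W l i * sectorProjection W l j = 0 := by
  rw [sectorProjection, sectorProjection, Matrix.mul_assoc, ← Matrix.mul_assoc _ (sector W l j),
    conjTranspose_sector_mul_sector_of_ne hW l hij, Matrix.zero_mul, Matrix.mul_zero]

variable [DecidableEq n]

lemma conjTranspose_mul_one_sub_mul_le {V : Matrix n κ 𝕜}
    (hV : Vᴴ * V = 1) (T : Matrix n κ 𝕜) :
    Tᴴ * (1 - V * Vᴴ) * T ≤ (T - V)ᴴ * (T - V) := by
  have h_right : (1 - V * Vᴴ) * V = 0 := by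
    rw [Matrix.sub_mul, Matrix.mul_assoc, hV, Matrix.one_mul, Matrix.mul_one, sub_self]
  have h_left : Vᴴ * (1 - V * Vᴴ) = 0 := by
    rw [Matrix.mul_sub, ← Matrix.mul_assoc, hV, Matrix.one_mul, Matrix.mul_one, sub_self]
  calc Tᴴ * (1 - V * Vᴴ) * T = (T - V)ᴴ * (1 - V * Vᴴ) * (T - V) := by
        rw [conjTranspose_sub, Matrix.sub_mul Tᴴ, h_left, sub_zero, Matrix.mul_sub _ T,
          Matrix.mul_assoc _ _ V, h_right, Matrix.mul_zero, sub_zero]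
    _ ≤ (T - V)ᴴ * 1 * (T - V) :=
        conjTranspose_mul_mul_mono (sub_le_self 1 (mul_conjTranspose_self_nonneg V)) _
    _ = (T - V)ᴴ * (T - V) := by rw [Matrix.mul_one]

lemma re_diag_one_sub_sectorProjection_le {W : Matrix n κ 𝕜} (hW : Wᴴ * W = 1) (l : κ → ι)
    (T : Matrix n κ 𝕜) (e : κ) :
    RCLike.re ((Tᴴ * (1 - sectorProjection W l (l e)) * T).diag e) ≤
      RCLike.re (((T - W)ᴴ * (T - W)).diag e) :=
  re_diag_mono (conjTranspose_mul_one_sub_mul_le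
    (conjTranspose_sector_mul_sector hW l (l e)) (sector T l (l e))) ⟨e, rfl⟩

end Sectors

lemma exists_orthogonal_projections_of_gram [Fintype n] [DecidableEq n] [Fintype κ]
    [DecidableEq κ] (R : Matrix n κ 𝕜) (l : κ → ι) {x : κ → ℝ} (hx : ∀ e, 0 ≤ x e)
    {γ : ℝ} (hγ : 0 ≤ γ) (h_unit : ∀ e, (Rᴴ * R).diag e = 1)
    (h_gram : ∀ e, RCLike.re (((Rᴴ * R - 1) * (Rᴴ * R - 1)).diag e) ≤ γ) :
    ∃ Pr : ι → Matrix n n 𝕜, (∀ i, IsStarProjection (Pr i)) ∧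
      (Pairwise fun i j ↦ Pr i * Pr j = 0) ∧
      ∑ e, x e * RCLike.re ((Rᴴ * (1 - Pr (l e)) * R).diag e) ≤ 2 * γ * ∑ e, x e := by
  classical
  have h_card : (Fintype.card κ : ℝ) ≤ Fintype.card n + γ * Fintype.card κ := by
    refine (card_le_card_add_re_trace R).trans (add_le_add_right ?_ _)
    rw [trace, map_sum, mul_comm, ← nsmul_eq_mul]
    exact sum_le_card_nsmul _ _ _ fun e _ ↦ h_gram e
  obtain ⟨S, hS, h_drop⟩ := exists_card_le_and_sum_compl_le hx hγ h_card
  set T := R.submatrix id ((↑) : S → κ)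
  obtain ⟨W, hW, h_near⟩ := exists_isometry_sub_conjTranspose_mul_le T (by simpa using hS)
  refine ⟨sectorProjection W (l ∘ (↑)), isStarProjection_sectorProjection hW _,
    fun i j ↦ sectorProjection_mul_sectorProjection hW _, ?_⟩
  have h_kept (e : κ) (he : e ∈ S) :
      RCLike.re ((Rᴴ * (1 - sectorProjection W (l ∘ (↑)) (l e)) * R).diag e) ≤ γ := by
    lift e to S using he
    have h_gram_sub : Tᴴ * T - 1 = (Rᴴ * R - 1).submatrix (↑) (↑) := by
      rw [submatrix_sub, Pi.sub_apply, Pi.sub_apply, submatrix_one _ Subtype.val_injective,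
        submatrix_mul _ _ _ id _ Function.bijective_id, conjTranspose_submatrix]
    calc _ ≤ RCLike.re (((T - W)ᴴ * (T - W)).diag e) :=
          re_diag_one_sub_sectorProjection_le hW (l ∘ (↑)) T e
      _ ≤ RCLike.re (((Tᴴ * T - 1) * (Tᴴ * T - 1)).diag e) := re_diag_mono h_near e
      _ ≤ RCLike.re (((Rᴴ * R - 1) * (Rᴴ * R - 1)).diag e) := by
          rw [h_gram_sub]
          exact re_diag_mono (submatrix_mul_submatrix_le
            ((isHermitian_conjTranspose_mul_self R).sub isHermitian_one)
            Subtype.val_injective) e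
      _ ≤ γ := h_gram e
  have h_dropped (e : κ) :
      RCLike.re ((Rᴴ * (1 - sectorProjection W (l ∘ (↑)) (l e)) * R).diag e) ≤ 1 := by
    have h_le := re_diag_mono (conjTranspose_mul_mul_mono (sub_le_self (1 : Matrix n n 𝕜)
      (isStarProjection_sectorProjection hW (l ∘ (↑)) (l e)).nonneg) R) e
    rwa [Matrix.mul_one, h_unit, RCLike.one_re] at h_le
  exact sum_mul_le_of_le_of_sum_compl_le hx hγ h_kept h_dropped h_drop

section Expectation

variable [Fintype n]

/-- The expectation value `re (tr (A ρ))` of the observable `A` in the state `ρ`, as a functional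
into `ℝ` so that the estimates are real inequalities. -/
noncomputable def expectation (ρ : Matrix n n 𝕜) : Matrix n n 𝕜 →ₗ[ℝ] ℝ :=
  RCLike.reLm ∘ₗ traceLinearMap n ℝ 𝕜 ∘ₗ LinearMap.mulRight ℝ ρ

lemma expectation_apply (ρ A : Matrix n n 𝕜) : expectation ρ A = RCLike.re (A * ρ).trace := rfl

lemma expectation_conjTranspose_mul_mul [Fintype m] (ρ : Matrix m m 𝕜) (T : Matrix n m 𝕜)
    (A : Matrix n n 𝕜) : expectation ρ (Tᴴ * A * T) = expectation (T * ρ * Tᴴ) A := by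
  rw [expectation_apply, expectation_apply, Matrix.mul_assoc, Matrix.mul_assoc, trace_mul_comm,
    Matrix.mul_assoc]

lemma expectation_mul_diagonal_mul [Fintype κ] [DecidableEq κ] (V : Matrix n κ 𝕜) (x : κ → ℝ)
    (A : Matrix n n 𝕜) :
    expectation (V * diagonal (fun a ↦ (x a : 𝕜)) * Vᴴ) A =
      ∑ a, x a * RCLike.re ((Vᴴ * A * V).diag a) := by
  rw [← expectation_conjTranspose_mul_mul, expectation_apply, trace, map_sum]
  refine sum_congr rfl fun a _ ↦ ?_
  rw [diag_apply, mul_diagonal, mul_comm, RCLike.re_ofReal_mul, diag_apply]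

lemma trace_mul_nonneg {A ρ : Matrix n n 𝕜} (hA : 0 ≤ A) (hρ : 0 ≤ ρ) : 0 ≤ (A * ρ).trace := by
  classical
  obtain ⟨N, rfl⟩ := CStarAlgebra.nonneg_iff_eq_star_mul_self.1 hρ
  rw [← Matrix.mul_assoc, trace_mul_comm, ← Matrix.mul_assoc]
  exact (Matrix.nonneg_iff_posSemidef.1 (star_right_conjugate_nonneg hA N)).trace_nonneg

lemma expectation_mono {ρ A B : Matrix n n 𝕜} (hρ : 0 ≤ ρ) (h : A ≤ B) :
    expectation ρ A ≤ expectation ρ B := by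
  rw [← sub_nonneg, ← map_sub]
  exact (RCLike.nonneg_iff.1 (trace_mul_nonneg (sub_nonneg.2 h) hρ)).1

lemma coe_expectation {ρ A : Matrix n n 𝕜} (hρ : 0 ≤ ρ) (hA : 0 ≤ A) :
    (expectation ρ A : 𝕜) = (A * ρ).trace := by
  obtain ⟨r, -, hr⟩ := RCLike.nonneg_iff_exists_ofReal.1 (trace_mul_nonneg hA hρ)
  rw [expectation_apply, ← hr, RCLike.ofReal_re]

lemma sum_trace_eq_coe_sum_expectation [Fintype ι] [Fintype m] {ρ : ι → Matrix m m 𝕜}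
    (hρ : ∀ i, 0 ≤ ρ i) {A : ι → Matrix n n 𝕜} (hA : ∀ i, 0 ≤ A i) {Y : ι → Matrix n m 𝕜} :
    ∑ i, ((Y i)ᴴ * A i * Y i * ρ i).trace =
      ((∑ i, expectation (ρ i) ((Y i)ᴴ * A i * Y i) : ℝ) : 𝕜) := by
  rw [RCLike.ofReal_sum]
  refine sum_congr rfl fun i _ ↦ (coe_expectation (hρ i) ?_).symm
  simpa using conjTranspose_mul_mul_mono (hA i) (Y i)

lemma sum_trace_le_re_trace [Fintype ι] {ρ : ι → Matrix n n 𝕜} {ρ' : Matrix n n 𝕜}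
    (hρ' : ρ'.PosSemidef) (h : (ρ' - ∑ i, ρ i).PosSemidef) :
    ∑ i, (ρ i).trace ≤ ((RCLike.re ρ'.trace : ℝ) : 𝕜) := by
  obtain ⟨r, -, hr⟩ := RCLike.nonneg_iff_exists_ofReal.1 hρ'.trace_nonneg
  rw [← hr, RCLike.ofReal_re, hr, ← trace_sum, ← sub_nonneg, ← trace_sub]
  exact h.trace_nonneg

end Expectation

section AlmostOrthogonal

variable {τ : ι → Type*}

/-- The matrix whose columns are those of all the `V i`, side by side; it collects the eigenvectors
of all the states into one family. -/
def concatColumns (V : ∀ i, Matrix n (τ i) 𝕜) : Matrix n (Σ i, τ i) 𝕜 :=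
  of fun r e ↦ V e.1 r e.2

lemma concatColumns_mul_conjTranspose [Fintype ι] [∀ i, Fintype (τ i)]
    (V : ∀ i, Matrix n (τ i) 𝕜) :
    concatColumns V * (concatColumns V)ᴴ = ∑ i, V i * (V i)ᴴ := by
  ext r q
  simp only [concatColumns, mul_apply, Fintype.sum_sigma, Matrix.sum_apply, conjTranspose_apply,
    of_apply]

variable [Fintype n]

lemma diag_gram_concatColumns [∀ i, DecidableEq (τ i)] {V : ∀ i, Matrix n (τ i) 𝕜}
    (hV : ∀ i, (V i)ᴴ * V i = 1) (e : Σ i, τ i) :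
    ((concatColumns V)ᴴ * concatColumns V).diag e = 1 :=
  (congrFun₂ (hV e.1) e.2 e.2).trans (one_apply_eq _)

variable [DecidableEq n] [Fintype ι] [DecidableEq ι]

lemma conjTranspose_mul_sum_mul_le [∀ i, Fintype (τ i)] [∀ i, DecidableEq (τ i)]
    {P : ι → Matrix n n 𝕜} (hP : ∀ i, IsStarProjection (P i)) {γ : ℝ}
    (h_overlap : ∀ i, P i * (∑ j ∈ univ.erase i, P j) * P i ≤ γ • (1 : Matrix n n 𝕜))
    {V : ∀ i, Matrix n (τ i) 𝕜} (hV : ∀ i, (V i)ᴴ * V i = 1) (hPV : ∀ i, P i * V i = V i) (i : ι) :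
    (V i)ᴴ * (∑ j, V j * (V j)ᴴ) * V i ≤ (1 + γ) • (1 : Matrix (τ i) (τ i) 𝕜) := by
  have hVP (i : ι) : (V i)ᴴ * P i = (V i)ᴴ := by
    rw [← (hP i).isSelfAdjoint.star_eq, star_eq_conjTranspose, ← conjTranspose_mul, hPV]
  have h_range (j : ι) : V j * (V j)ᴴ ≤ P j :=
    (isStarProjection_mul_conjTranspose (hV j)).le_of_mul_eq_left (hP j) (by
      rw [Matrix.mul_assoc, hVP])
  have h_self : (V i)ᴴ * (V i * (V i)ᴴ) * V i = 1 := by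
    rw [← Matrix.mul_assoc, hV, Matrix.one_mul, hV]
  have h_others : (V i)ᴴ * (∑ j ∈ univ.erase i, P j) * V i ≤ γ • 1 := by
    have h_conj := conjTranspose_mul_mul_mono (h_overlap i) (V i)
    rwa [Matrix.mul_assoc, Matrix.mul_assoc, hPV, ← Matrix.mul_assoc, ← Matrix.mul_assoc, hVP,
      Matrix.mul_smul, Matrix.mul_one, Matrix.smul_mul, hV] at h_conj
  calc (V i)ᴴ * (∑ j, V j * (V j)ᴴ) * V i
      = 1 + (V i)ᴴ * (∑ j ∈ univ.erase i, V j * (V j)ᴴ) * V i := by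
        rw [← add_sum_erase univ _ (mem_univ i), Matrix.mul_add, Matrix.add_mul, h_self]
    _ ≤ 1 + (V i)ᴴ * (∑ j ∈ univ.erase i, P j) * V i :=
        add_le_add_right (conjTranspose_mul_mul_mono (sum_le_sum fun j _ ↦ h_range j) (V i)) 1
    _ ≤ (1 + γ) • 1 := by
        rw [add_smul, one_smul]
        exact add_le_add_right h_others 1

lemma re_diag_gram_sub_one_sq_le [∀ i, Fintype (τ i)] [∀ i, DecidableEq (τ i)]
    {P : ι → Matrix n n 𝕜} (hP : ∀ i, IsStarProjection (P i)) {γ : ℝ}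
    (h_overlap : ∀ i, P i * (∑ j ∈ univ.erase i, P j) * P i ≤ γ • (1 : Matrix n n 𝕜))
    {V : ∀ i, Matrix n (τ i) 𝕜} (hV : ∀ i, (V i)ᴴ * V i = 1) (hPV : ∀ i, P i * V i = V i)
    (e : Σ i, τ i) :
    RCLike.re ((((concatColumns V)ᴴ * concatColumns V - 1) *
      ((concatColumns V)ᴴ * concatColumns V - 1)).diag e) ≤ γ := by
  set R := concatColumns V
  have h_expand : (Rᴴ * R - 1) * (Rᴴ * R - 1) = Rᴴ * (R * Rᴴ) * R - Rᴴ * R - Rᴴ * R + 1 := by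
    simp only [Matrix.mul_sub, Matrix.sub_mul, Matrix.mul_one, Matrix.one_mul, Matrix.mul_assoc]
    abel
  have h_sector : (Rᴴ * (R * Rᴴ) * R).diag e =
      ((V e.1)ᴴ * (∑ j, V j * (V j)ᴴ) * V e.1).diag e.2 := by
    rw [concatColumns_mul_conjTranspose]
    rfl
  have h_le := re_diag_mono (conjTranspose_mul_sum_mul_le hP h_overlap hV hPV e.1) e.2
  simp only [h_expand, diag_add, diag_sub, Pi.add_apply, Pi.sub_apply, R,
    diag_gram_concatColumns hV, h_sector, diag_one, Pi.one_apply, map_add, map_sub, RCLike.one_re,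
    diag_smul, Pi.smul_apply, RCLike.smul_re, mul_one] at h_le ⊢
  linarith

theorem exists_orthogonal_projections_of_almost_orthogonal {P X : ι → Matrix n n 𝕜}
    (hP : ∀ i, IsStarProjection (P i)) (hX : ∀ i, 0 ≤ X i) (hPX : ∀ i, P i * X i = X i) {γ : ℝ}
    (hγ : 0 ≤ γ)
    (h_overlap : ∀ i, P i * (∑ j ∈ univ.erase i, P j) * P i ≤ γ • (1 : Matrix n n 𝕜)) :
    ∃ Pr : ι → Matrix n n 𝕜, (∀ i, IsStarProjection (Pr i)) ∧
      (Pairwise fun i j ↦ Pr i * Pr j = 0) ∧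
      ∑ i, expectation (X i) (1 - Pr i) ≤ 2 * γ * ∑ i, expectation (X i) 1 := by
  choose s V x hx hV hX_eq using fun i ↦ exists_eq_mul_diagonal_mul_conjTranspose (hX i)
  have hPV (i : ι) : P i * V i = V i := by
    have hXV : X i * V i * diagonal (fun a ↦ ((x i a)⁻¹ : 𝕜)) = V i := by
      rw [hX_eq i, Matrix.mul_assoc _ _ (V i), hV, Matrix.mul_one, Matrix.mul_assoc,
        diagonal_mul_diagonal]
      simp [(hx i _).ne']
    rw [← hXV, Matrix.mul_assoc, ← Matrix.mul_assoc, hPX]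
  obtain ⟨Pr, h_proj, h_orth, h_loss⟩ :=
    exists_orthogonal_projections_of_gram (concatColumns V) Sigma.fst
      (x := fun e ↦ x e.1 e.2) (fun e ↦ (hx e.1 e.2).le) hγ (diag_gram_concatColumns hV)
      (re_diag_gram_sub_one_sq_le hP h_overlap hV hPV)
  refine ⟨Pr, h_proj, h_orth, ?_⟩
  have h_expectation (i : ι) (A : Matrix n n 𝕜) :
      expectation (X i) A = ∑ a, x i a * RCLike.re (((V i)ᴴ * A * V i).diag a) := by
    rw [hX_eq, expectation_mul_diagonal_mul]
  simp only [h_expectation, Matrix.mul_one, hV, diag_one, Pi.one_apply, RCLike.one_re, mul_one]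
  simp only [Fintype.sum_sigma] at h_loss
  exact h_loss

end AlmostOrthogonal

section Truncation

variable [Fintype n]

lemma conjTranspose_mul_self_of_isStarProjection {P : Matrix n n 𝕜} (hP : IsStarProjection P)
    (T : Matrix n m 𝕜) : (P * T)ᴴ * (P * T) = Tᴴ * P * T := by
  rw [conjTranspose_mul, ← star_eq_conjTranspose P, hP.isSelfAdjoint.star_eq, Matrix.mul_assoc,
    ← Matrix.mul_assoc P, hP.isIdempotentElem.eq, Matrix.mul_assoc]

lemma conjTranspose_mul_mul_le_of_sub_le [Finite m] [DecidableEq n] {M : Matrix n n 𝕜}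
    (hM : 0 ≤ M) (hM_one : M ≤ 1) {S T : Matrix n m 𝕜} {E : Matrix m m 𝕜}
    (hE : (T - S)ᴴ * (T - S) ≤ E) :
    Tᴴ * M * T ≤ (2 : ℝ) • (Sᴴ * M * S) + (2 : ℝ) • E := by
  cases nonempty_fintype m
  have h_error : (T - S)ᴴ * M * (T - S) ≤ E := by
    refine (conjTranspose_mul_mul_mono hM_one _).trans ?_
    rwa [Matrix.mul_one]
  calc Tᴴ * M * T = (S + (T - S))ᴴ * M * (S + (T - S)) := by rw [add_sub_cancel]
    _ ≤ (2 : ℝ) • (Sᴴ * M * S) + (2 : ℝ) • ((T - S)ᴴ * M * (T - S)) :=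
        conjTranspose_mul_mul_add_le hM S (T - S)
    _ ≤ (2 : ℝ) • (Sᴴ * M * S) + (2 : ℝ) • E :=
        add_le_add_right (smul_le_smul_of_nonneg_left h_error zero_le_two) _

variable [Fintype m] [DecidableEq m]

lemma exists_right_truncation {C : Matrix n n 𝕜} (hC : 0 ≤ C) {Y : Matrix n m 𝕜}
    (hY : Yᴴ * Y ≤ 1) {β : ℝ} (hβ : 0 < β) :
    ∃ T : Matrix n m 𝕜, Tᴴ * T ≤ 1 ∧ T * Tᴴ ≤ Y * Yᴴ ∧ Tᴴ * C * T ≤ β • (1 : Matrix m m 𝕜) ∧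
      (Y - T)ᴴ * (Y - T) ≤ β⁻¹ • (Yᴴ * C * Y) := by
  have hYCY : 0 ≤ Yᴴ * C * Y := by simpa using conjTranspose_mul_mul_mono hC Y
  obtain ⟨Q, hQ, hQ_le, hQ_compl⟩ := exists_isStarProjection_spectral_cut hYCY hβ.le
  have hQ_star : Qᴴ = Q := hQ.isSelfAdjoint.star_eq
  have h_gram {S : Matrix m m 𝕜} (hS : IsStarProjection S) : (Y * S)ᴴ * (Y * S) ≤ S := by
    have hS_sq : Sᴴ * S = S := by
      rw [← star_eq_conjTranspose, hS.isSelfAdjoint.star_eq, hS.isIdempotentElem.eq]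
    have h_conj := conjTranspose_mul_mul_mono hY S
    rwa [Matrix.mul_one, hS_sq, ← Matrix.mul_assoc, ← conjTranspose_mul, Matrix.mul_assoc] at h_conj
  refine ⟨Y * Q, (h_gram hQ).trans hQ.le_one, ?_, ?_, ?_⟩
  · have h_conj := mul_mul_conjTranspose_mono hQ.le_one Y
    rw [Matrix.mul_one] at h_conj
    rwa [conjTranspose_mul, hQ_star, Matrix.mul_assoc, ← Matrix.mul_assoc Q,
      hQ.isIdempotentElem.eq, ← Matrix.mul_assoc]
  · simpa only [conjTranspose_mul, hQ_star, Matrix.mul_assoc] using hQ_le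
  · have h_sub : Y - Y * Q = Y * (1 - Q) := by rw [Matrix.mul_sub, Matrix.mul_one]
    rw [h_sub]
    exact (h_gram hQ.one_sub).trans ((le_inv_smul_iff_of_pos hβ).2 hQ_compl)

lemma exists_left_truncation (T : Matrix n m 𝕜) {δ : ℝ} (hδ : 0 < δ) :
    ∃ P : Matrix n n 𝕜, IsStarProjection P ∧ δ • P ≤ T * Tᴴ ∧
      (T - P * T)ᴴ * (T - P * T) ≤ δ • (1 : Matrix m m 𝕜) := by
  classical
  obtain ⟨Q, hQ, hQ_le, hQ_compl⟩ :=
    exists_isStarProjection_spectral_cut (mul_conjTranspose_self_nonneg T) hδ.le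
  refine ⟨1 - Q, hQ.one_sub, hQ_compl, ?_⟩
  have h_flip : (Q * T) * (Q * T)ᴴ ≤ δ • (1 : Matrix n n 𝕜) := by
    rwa [conjTranspose_mul, ← star_eq_conjTranspose Q, hQ.isSelfAdjoint.star_eq, Matrix.mul_assoc,
      ← Matrix.mul_assoc T, ← Matrix.mul_assoc]
  rw [Matrix.sub_mul, Matrix.one_mul, sub_sub_cancel]
  simpa only [conjTranspose_conjTranspose] using
    mul_conjTranspose_le_of_conjTranspose_mul_le (T := (Q * T)ᴴ) hδ (by
      rwa [conjTranspose_conjTranspose])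

variable [DecidableEq n]

lemma mul_mul_le_of_smul_le_mul_conjTranspose {C P : Matrix n n 𝕜} (hC : 0 ≤ C)
    (hP : IsStarProjection P) {T : Matrix n m 𝕜} {β δ : ℝ} (hβ : 0 < β) (hδ : 0 < δ)
    (hT : Tᴴ * C * T ≤ β • (1 : Matrix m m 𝕜)) (hPT : δ • P ≤ T * Tᴴ) :
    P * C * P ≤ (β / δ) • (1 : Matrix n n 𝕜) := by
  have hP_star : Pᴴ = P := hP.isSelfAdjoint.star_eq
  obtain ⟨N, rfl⟩ := CStarAlgebra.nonneg_iff_eq_star_mul_self.1 hC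
  have h_flip : (N * T) * (N * T)ᴴ ≤ β • (1 : Matrix n n 𝕜) := by
    refine mul_conjTranspose_le_of_conjTranspose_mul_le hβ ?_
    rwa [conjTranspose_mul, Matrix.mul_assoc, ← Matrix.mul_assoc Nᴴ, ← Matrix.mul_assoc]
  have h_smul : δ • ((P * Nᴴ)ᴴ * (P * Nᴴ)) ≤ β • (1 : Matrix n n 𝕜) := by
    refine le_trans (le_of_eq_of_le ?_ (mul_mul_conjTranspose_mono hPT N)) (h_flip.trans_eq' ?_)
    · rw [conjTranspose_mul, conjTranspose_conjTranspose, hP_star, Matrix.mul_smul,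
        Matrix.smul_mul, Matrix.mul_assoc, ← Matrix.mul_assoc P, hP.isIdempotentElem.eq,
        Matrix.mul_assoc]
    · simp only [conjTranspose_mul, Matrix.mul_assoc]
  have h_div : (P * Nᴴ)ᴴ * (P * Nᴴ) ≤ (β / δ) • (1 : Matrix n n 𝕜) := by
    rw [div_eq_inv_mul, mul_smul]
    exact (le_inv_smul_iff_of_pos hδ).2 h_smul
  refine (mul_conjTranspose_le_of_conjTranspose_mul_le (div_pos hβ hδ) h_div).trans_eq' ?_
  rw [conjTranspose_mul, conjTranspose_conjTranspose, hP_star, star_eq_conjTranspose]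
  simp only [Matrix.mul_assoc]

lemma exists_truncation {C : Matrix n n 𝕜} (hC : 0 ≤ C) {Y : Matrix n m 𝕜} (hY : Yᴴ * Y ≤ 1)
    {β δ : ℝ} (hβ : 0 < β) (hδ : 0 < δ) :
    ∃ (P : Matrix n n 𝕜) (Z : Matrix n m 𝕜), IsStarProjection P ∧ P * Z = Z ∧ Zᴴ * Z ≤ 1 ∧
      δ • P ≤ Y * Yᴴ ∧ P * C * P ≤ (β / δ) • (1 : Matrix n n 𝕜) ∧
      ∀ M : Matrix n n 𝕜, 0 ≤ M → M ≤ 1 →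
        Yᴴ * M * Y ≤ (4 : ℝ) • (Zᴴ * M * Z) + (4 * δ) • 1 + (2 / β) • (Yᴴ * C * Y) := by
  obtain ⟨T, hT, hTY, hTC, hT_error⟩ := exists_right_truncation hC hY hβ
  obtain ⟨P, hP, hPT, hP_error⟩ := exists_left_truncation T hδ
  have hZ : (P * T)ᴴ * (P * T) ≤ 1 := by
    have h_conj := conjTranspose_mul_mul_mono hP.le_one T
    rw [Matrix.mul_one, ← conjTranspose_mul_self_of_isStarProjection hP] at h_conj
    exact h_conj.trans hT
  refine ⟨P, P * T, hP, ?_, hZ, hPT.trans hTY,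
    mul_mul_le_of_smul_le_mul_conjTranspose hC hP hβ hδ hTC hPT, fun M hM hM_one ↦ ?_⟩
  · rw [← Matrix.mul_assoc, hP.isIdempotentElem.eq]
  calc Yᴴ * M * Y ≤ (2 : ℝ) • (Tᴴ * M * T) + (2 : ℝ) • (β⁻¹ • (Yᴴ * C * Y)) :=
        conjTranspose_mul_mul_le_of_sub_le hM hM_one hT_error
    _ ≤ (2 : ℝ) • ((2 : ℝ) • ((P * T)ᴴ * M * (P * T)) + (2 : ℝ) • (δ • (1 : Matrix m m 𝕜))) +
          (2 : ℝ) • (β⁻¹ • (Yᴴ * C * Y)) :=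
        add_le_add_left (smul_le_smul_of_nonneg_left
          (conjTranspose_mul_mul_le_of_sub_le hM hM_one hP_error) zero_le_two) _
    _ = (4 : ℝ) • ((P * T)ᴴ * M * (P * T)) + (4 * δ) • 1 + (2 / β) • (Yᴴ * C * Y) := by
        module

end Truncation

section Main

variable [Fintype m] [Fintype n] [DecidableEq m] [DecidableEq n]

lemma conjTranspose_mul_self_le_one_of_sum_le [Fintype ι] {Y : ι → Matrix n m 𝕜}
    (hY : ∑ j, Y j * (Y j)ᴴ ≤ 1) (i : ι) : (Y i)ᴴ * Y i ≤ 1 := by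
  have h_le : Y i * (Y i)ᴴ ≤ 1 :=
    (single_le_sum (fun j _ ↦ mul_conjTranspose_self_nonneg (Y j)) (mem_univ i)).trans hY
  simpa only [conjTranspose_conjTranspose, one_smul] using
    mul_conjTranspose_le_of_conjTranspose_mul_le (T := (Y i)ᴴ) one_pos (by
      rwa [conjTranspose_conjTranspose, one_smul])

variable [Fintype ι] [DecidableEq ι]

-- The exponents balance the three errors at order `δ`: spectral cuts at `β = δ ^ 3` and `δ` leave
-- projections with overlap `β / δ ^ 2 = δ`.
theorem exists_orthogonal_projections_of_expectation_le {ρ : ι → Matrix m m 𝕜}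
    {Y : ι → Matrix n m 𝕜} {δ t : ℝ} (hδ : 0 < δ) (hρ : ∀ i, 0 ≤ ρ i)
    (hρ_sum : ∑ i, expectation (ρ i) 1 ≤ t) (hY : ∑ j, Y j * (Y j)ᴴ ≤ 1)
    (h_overlap : ∑ i, expectation (ρ i) ((Y i)ᴴ * (∑ j ∈ univ.erase i, Y j * (Y j)ᴴ) * Y i) ≤
      δ ^ 4 * t) :
    ∃ Pr : ι → Matrix n n 𝕜, (∀ i, IsStarProjection (Pr i)) ∧
      (Pairwise fun i j ↦ Pr i * Pr j = 0) ∧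
      ∑ i, expectation (ρ i) ((Y i)ᴴ * (1 - Pr i) * Y i) ≤ 14 * δ * t := by
  choose P Z hP hPZ hZ hPY hPC h_trunc using fun i ↦
    exists_truncation
      (sum_nonneg fun j (_ : j ∈ univ.erase i) ↦ mul_conjTranspose_self_nonneg (Y j))
      (conjTranspose_mul_self_le_one_of_sum_le hY i) (pow_pos hδ 3) hδ
  have hP_overlap (i : ι) : P i * (∑ j ∈ univ.erase i, P j) * P i ≤ δ • (1 : Matrix n n 𝕜) := by
    have h_sum : δ • ∑ j ∈ univ.erase i, P j ≤ ∑ j ∈ univ.erase i, Y j * (Y j)ᴴ := by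
      rw [smul_sum]
      exact sum_le_sum fun j _ ↦ hPY j
    convert mul_mul_le_of_smul_le (hP i).isSelfAdjoint hδ h_sum (hPC i) using 2
    field_simp
  have hX (i : ι) : 0 ≤ Z i * ρ i * (Z i)ᴴ := by
    simpa using mul_mul_conjTranspose_mono (hρ i) (Z i)
  obtain ⟨Pr, h_proj, h_orth, h_loss⟩ :=
    exists_orthogonal_projections_of_almost_orthogonal hP hX
      (fun i ↦ by rw [← Matrix.mul_assoc, ← Matrix.mul_assoc, hPZ]) hδ.le hP_overlap
  refine ⟨Pr, h_proj, h_orth, ?_⟩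
  have h_mass : ∑ i, expectation (Z i * ρ i * (Z i)ᴴ) 1 ≤ ∑ i, expectation (ρ i) 1 := by
    refine sum_le_sum fun i _ ↦ ?_
    rw [← expectation_conjTranspose_mul_mul, Matrix.mul_one]
    exact expectation_mono (hρ i) (hZ i)
  have h_term := sum_le_sum fun i (_ : i ∈ univ) ↦ expectation_mono (hρ i)
    (h_trunc i (1 - Pr i) (h_proj i).one_sub_nonneg (h_proj i).one_sub.le_one)
  simp only [map_add, map_smul, smul_eq_mul, expectation_conjTranspose_mul_mul _ (Z _),
    sum_add_distrib, ← mul_sum] at h_term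
  have h_cut : 2 / δ ^ 3 * ∑ i, expectation (ρ i)
      ((Y i)ᴴ * (∑ j ∈ univ.erase i, Y j * (Y j)ᴴ) * Y i) ≤ 2 * δ * t := by
    rw [div_mul_eq_mul_div, div_le_iff₀ (pow_pos hδ 3)]
    linarith
  linarith [mul_le_mul_of_nonneg_left (h_mass.trans hρ_sum) hδ.le,
    mul_le_mul_of_nonneg_left hρ_sum hδ.le]

end Main

end Orthogonalization

open Orthogonalization MatrixOrder in
theorem orthogonalization_lemma_general {𝕜 ι m n : Type*} [RCLike 𝕜] [Fintype ι] [DecidableEq ι]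
    [Fintype m] [Fintype n] [DecidableEq n] {ρ : ι → Matrix m m 𝕜} {Y : ι → Matrix n m 𝕜}
    {α t : ℝ} (hρ : ∀ i, (ρ i).PosSemidef) (hρ_sum : ∑ i, (ρ i).trace ≤ (t : 𝕜))
    (hY : (1 - ∑ i, Y i * (Y i)ᴴ).PosSemidef) (hα : 0 < α)
    (h_overlap : ∑ i, ∑ j ∈ univ.erase i, ((Y i)ᴴ * (Y j * (Y j)ᴴ) * Y i * ρ i).trace ≤
      ((α * t : ℝ) : 𝕜)) :
    ∃ Pr : ι → Matrix n n 𝕜, (∀ i, (Pr i).IsHermitian) ∧ (∀ i, Pr i * Pr i = Pr i) ∧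
      (∀ i j, i ≠ j → Pr i * Pr j = 0) ∧
      ∑ i, ((Y i)ᴴ * (1 - Pr i) * Y i * ρ i).trace ≤ ((14 * α ^ (1 / 4 : ℝ) * t : ℝ) : 𝕜) := by
  classical
  have hρ_nonneg (i : ι) : 0 ≤ ρ i := (hρ i).nonneg
  have h_pow : (α ^ (1 / 4 : ℝ)) ^ 4 = α := by
    rw [← Real.rpow_natCast, ← Real.rpow_mul hα.le]
    norm_num
  have h_mass : ∑ i, expectation (ρ i) 1 ≤ t := by
    simpa only [expectation_apply, Matrix.one_mul, map_sum, RCLike.ofReal_re] using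
      (RCLike.le_iff_re_im.1 hρ_sum).1
  simp only [← trace_sum, ← Matrix.sum_mul, ← Matrix.mul_sum] at h_overlap
  rw [trace_sum, sum_trace_eq_coe_sum_expectation hρ_nonneg fun i ↦
    sum_nonneg fun j _ ↦ mul_conjTranspose_self_nonneg (Y j), RCLike.ofReal_le_ofReal,
    ← h_pow] at h_overlap
  obtain ⟨Pr, h_proj, h_orth, h_loss⟩ := exists_orthogonal_projections_of_expectation_le
    (Real.rpow_pos_of_pos hα _) hρ_nonneg h_mass (Matrix.le_iff.2 hY) h_overlap
  refine ⟨Pr, fun i ↦ (h_proj i).isSelfAdjoint, fun i ↦ (h_proj i).isIdempotentElem,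
    fun _ _ h ↦ h_orth h, ?_⟩
  rwa [sum_trace_eq_coe_sum_expectation hρ_nonneg fun i ↦ (h_proj i).one_sub_nonneg,
    RCLike.ofReal_le_ofReal]

/-- Lemma 5.3 (Orthogonalization Lemma): operators `Ŷ i` that are pairwise almost
orthogonal relative to the states `ρi i` are close to admitting a joint block-diagonal
decomposition given by pairwise orthogonal projectors `Pr i`. -/
theorem orthogonalization_lemma :
    ∃ c K : ℝ, 0 < c ∧ 0 < K ∧
      ∀ (k m n : ℕ), 0 < k → 0 < m → 0 < n →
      ∀ (ρi : Fin k → Matrix (Fin m) (Fin m) ℂ) (ρ : Matrix (Fin m) (Fin m) ℂ)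
        (Y : Fin k → Matrix (Fin n) (Fin m) ℂ) (α : ℝ),
      (∀ i, (ρi i).PosSemidef) → ρ.PosSemidef →
      (ρ - ∑ i, ρi i).PosSemidef →
      (1 - ∑ i, Y i * (Y i)ᴴ).PosSemidef →
      0 < α →
      (∑ i : Fin k, ∑ j ∈ univ.erase i,
          ((Y i)ᴴ * (Y j * (Y j)ᴴ) * Y i * ρi i).trace ≤ ((α * ρ.trace.re : ℝ) : ℂ)) →
      ∃ Pr : Fin k → Matrix (Fin n) (Fin n) ℂ,
        (∀ i, (Pr i).IsHermitian) ∧ (∀ i, Pr i * Pr i = Pr i) ∧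
        (∀ i j, i ≠ j → Pr i * Pr j = 0) ∧
        ∑ i : Fin k, ((Y i)ᴴ * (1 - Pr i) * Y i * ρi i).trace ≤
          ((K * α ^ c * ρ.trace.re : ℝ) : ℂ) := by
  refine ⟨1 / 4, 14, by norm_num, by norm_num, fun k m n _ _ _ ρi ρ Y α hρi hρ h_le hY hα h ↦ ?_⟩
  exact orthogonalization_lemma_general hρi
    (Orthogonalization.sum_trace_le_re_trace hρ h_le) hY hα h
end

section
/- Let Q be a nonempty finite set, μ a probability distribution on Q, C a positive integer, and E a complex inner product space. Let f : Q^C → E, let M := E_{q∼μ^C}[f(q)], and for i ∈ {1,…,C} and q_i ∈ Q let M_{i,q_i} be the expectation of f(q) over q ∼ μ^C conditioned on coordinate i equaling q_i. Assume E_{q∼μ^C}[‖f(q)‖²] ≤ 1. Then 0 ≤ E_{(i,q_i)}[‖M − M_{i,q_i}‖²] ≤ (1/C) · E_{q∼μ^C}[‖f(q)‖²] ≤ 1/C, where E_{(i,q_i)} denotes expectation over i uniform in {1,…,C} and q_i ∼ μ. -/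
/-!
Approximate `f` by the additive function `T q = M + ∑ i, (M_{i, q_i} - M)`. By independence of the
coordinates, `T` has the same mean and the same one-coordinate conditional means as `f`, so `f - T`
is orthogonal to every sum of functions of one coordinate, in particular to `T`. Pythagoras then
gives `E‖f‖² = E‖T‖² + E‖f - T‖²`, and the summands of `T` are themselves pairwise orthogonal, so
that `E‖T‖² = ‖M‖² + ∑ i, E‖M - M_{i, q_i}‖²`.
-/

open Finset
open scoped RealInnerProductSpace

section Mean

theorem mul_prod_apply_update {ι R : Type*} [Fintype ι] [DecidableEq ι] [CommMonoid R]
    {Q : ι → Type*} (w : ∀ i, Q i → R) (q : ∀ i, Q i) (i : ι) (a : Q i) :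
    w i (q i) * ∏ j, w j (Function.update q i a j) = w i a * ∏ j, w j (q j) := by
  have off_i : ∏ j ∈ univ.erase i, w j (Function.update q i a j) =
      ∏ j ∈ univ.erase i, w j (q j) :=
    prod_congr rfl fun j hj => by rw [Function.update_of_ne (ne_of_mem_erase hj)]
  rw [← mul_prod_erase univ _ (mem_univ i), ← mul_prod_erase univ (fun j => w j (q j)) (mem_univ i),
    off_i, Function.update_self, mul_left_comm]

variable {ι R : Type*} [Fintype ι] [DecidableEq ι] [CommSemiring R]
  {Q : ι → Type*} [∀ i, Fintype (Q i)] (w : ∀ i, Q i → R)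
  {F : Type*} [AddCommMonoid F] [Module R F]

/-- The mean of a function on a finite product for the product of the weights `w i`, as a linear
map. The weights are not required to be nonnegative or normalized. -/
def productMean : ((∀ i, Q i) → F) →ₗ[R] F where
  toFun f := ∑ q, (∏ i, w i (q i)) • f q
  map_add' f g := by simp only [Pi.add_apply, smul_add, sum_add_distrib]
  map_smul' c f := by simp only [Pi.smul_apply, smul_sum, smul_comm c, RingHom.id_apply]

theorem productMean_apply (f : (∀ i, Q i) → F) :
    productMean w f = ∑ q, (∏ i, w i (q i)) • f q :=
  rfl

/-- The conditional mean given that coordinate `i` equals `a`, as a linear map. Since the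
coordinates are independent, it is encoded as the mean after overwriting coordinate `i` by `a`,
which makes sense also when `a` has weight zero. -/
def condMean (i : ι) (a : Q i) : ((∀ i, Q i) → F) →ₗ[R] F :=
  productMean w ∘ₗ LinearMap.funLeft R F (Function.update · i a)

theorem condMean_apply (i : ι) (a : Q i) (f : (∀ i, Q i) → F) :
    condMean w i a f = productMean w fun q => f (Function.update q i a) :=
  rfl

variable {w}

theorem productMean_nonneg [PartialOrder R] [IsOrderedRing R] (hw : ∀ i a, 0 ≤ w i a)
    {g : (∀ i, Q i) → R} (hg : ∀ q, 0 ≤ g q) : 0 ≤ productMean w g :=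
  sum_nonneg fun q _ => mul_nonneg (prod_nonneg fun i _ => hw i (q i)) (hg q)

theorem productMean_const (hw1 : ∀ i, ∑ a, w i a = 1) (c : F) :
    productMean w (fun _ => c) = c := by
  rw [productMean_apply, ← sum_smul, ← Fintype.prod_sum]
  simp only [hw1, prod_const_one, one_smul]

theorem productMean_eq_sum_condMean (hw1 : ∀ i, ∑ a, w i a = 1) (i : ι) (f : (∀ i, Q i) → F) :
    productMean w f = ∑ a, w i a • condMean w i a f := by
  -- Resampling coordinate `i` exchanges it with an independent copy.
  have swap_involutive : Function.Involutive
      fun x : Q i × (∀ j, Q j) => (x.2 i, Function.update x.2 i x.1) := by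
    rintro ⟨a, q⟩
    simp
  calc productMean w f
      = ∑ x : Q i × (∀ j, Q j), (w i x.1 * ∏ j, w j (x.2 j)) • f x.2 := by
        simp only [Fintype.sum_prod_type_right, ← sum_smul, ← sum_mul, hw1, one_mul,
          productMean_apply]
    _ = ∑ x : Q i × (∀ j, Q j),
          (w i x.1 * ∏ j, w j (x.2 j)) • f (Function.update x.2 i x.1) := by
        rw [← Equiv.sum_comp swap_involutive.toPerm]
        simp only [Function.Involutive.coe_toPerm, mul_prod_apply_update]
    _ = ∑ a, w i a • condMean w i a f := by
        simp only [Fintype.sum_prod_type, condMean_apply, productMean_apply, smul_sum, mul_smul]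

theorem condMean_comp_eval_self (hw1 : ∀ i, ∑ a, w i a = 1) {i : ι} (a : Q i) (g : Q i → F) :
    condMean w i a (fun q => g (q i)) = g a := by
  simp only [condMean_apply, Function.update_self, productMean_const hw1]

theorem productMean_comp_eval (hw1 : ∀ i, ∑ a, w i a = 1) (i : ι) (g : Q i → F) :
    productMean w (fun q => g (q i)) = ∑ a, w i a • g a := by
  rw [productMean_eq_sum_condMean hw1 i]
  simp only [condMean_comp_eval_self hw1]

theorem condMean_comp_eval_of_ne (hw1 : ∀ i, ∑ a, w i a = 1) {i k : ι} (hki : k ≠ i) (a : Q i)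
    (g : Q k → F) : condMean w i a (fun q => g (q k)) = ∑ b, w k b • g b := by
  simp only [condMean_apply, Function.update_of_ne hki, productMean_comp_eval hw1]

end Mean

section AdditivePart

variable {ι R : Type*} [Fintype ι] [DecidableEq ι] [CommSemiring R]
  {Q : ι → Type*} [∀ i, Fintype (Q i)] (w : ∀ i, Q i → R)
  {F : Type*} [AddCommGroup F] [Module R F] (f : (∀ i, Q i) → F)

/-- The first-order term of the Hoeffding decomposition of `f` in coordinate `i`: the deviation of
the conditional mean from the mean. -/
def mainEffect (i : ι) (a : Q i) : F :=
  condMean w i a f - productMean w f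

/-- The additive part of `f`: the sum of the terms of order at most one of its Hoeffding
decomposition. -/
def additivePart (q : ∀ i, Q i) : F :=
  productMean w f + ∑ i, mainEffect w f i (q i)

theorem additivePart_eq_add_sum :
    additivePart w f =
      (fun _ => productMean w f) + ∑ i, fun q : ∀ i, Q i => mainEffect w f i (q i) := by
  ext q
  simp only [additivePart, Pi.add_apply, Finset.sum_apply]

variable {w}

theorem sum_smul_mainEffect (hw1 : ∀ i, ∑ a, w i a = 1) (i : ι) :
    ∑ a, w i a • mainEffect w f i a = 0 := by
  simp only [mainEffect, smul_sub, sum_sub_distrib, ← productMean_eq_sum_condMean hw1,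
    ← sum_smul, hw1, one_smul, sub_self]

theorem productMean_additivePart (hw1 : ∀ i, ∑ a, w i a = 1) :
    productMean w (additivePart w f) = productMean w f := by
  simp only [additivePart_eq_add_sum, map_add, map_sum, productMean_const hw1,
    productMean_comp_eval hw1, sum_smul_mainEffect f hw1, sum_const_zero, add_zero]

theorem condMean_additivePart (hw1 : ∀ i, ∑ a, w i a = 1) (i : ι) (a : Q i) :
    condMean w i a (additivePart w f) = condMean w i a f := by
  have other_effects (k : ι) (hki : k ≠ i) :
      condMean w i a (fun q => mainEffect w f k (q k)) = 0 := by
    rw [condMean_comp_eval_of_ne hw1 hki, sum_smul_mainEffect f hw1]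
  rw [additivePart_eq_add_sum, map_add, map_sum, Fintype.sum_eq_single i other_effects,
    condMean_comp_eval_self hw1, condMean_apply, productMean_const hw1, mainEffect,
    add_sub_cancel]

end AdditivePart

section InnerProduct

variable {ι : Type*} [Fintype ι] [DecidableEq ι] {Q : ι → Type*} [∀ i, Fintype (Q i)]
  {w : ∀ i, Q i → ℝ} {E : Type*} [SeminormedAddCommGroup E] [InnerProductSpace ℝ E]

theorem productMean_inner_const (f : (∀ i, Q i) → E) (v : E) :
    productMean w (fun q => ⟪f q, v⟫) = ⟪productMean w f, v⟫ := by
  simp only [productMean_apply, sum_inner, real_inner_smul_left, smul_eq_mul]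

theorem productMean_inner_comp_eval (hw1 : ∀ i, ∑ a, w i a = 1) (f : (∀ i, Q i) → E) (i : ι)
    (g : Q i → E) :
    productMean w (fun q => ⟪f q, g (q i)⟫) = ∑ a, w i a * ⟪condMean w i a f, g a⟫ := by
  rw [productMean_eq_sum_condMean hw1 i]
  simp only [condMean_apply, Function.update_self, productMean_inner_const, smul_eq_mul]

theorem productMean_inner_additivePart (hw1 : ∀ i, ∑ a, w i a = 1) (f h : (∀ i, Q i) → E) :
    productMean w (fun q => ⟪h q, additivePart w f q⟫) =
      ⟪productMean w h, productMean w f⟫ +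
        ∑ i, ∑ a, w i a * ⟪condMean w i a h, mainEffect w f i a⟫ := by
  have expand : (fun q => ⟪h q, additivePart w f q⟫) =
      (fun q => ⟪h q, productMean w f⟫) +
        ∑ i, fun q : ∀ i, Q i => ⟪h q, mainEffect w f i (q i)⟫ := by
    ext q
    simp only [additivePart, inner_add_right, inner_sum, Pi.add_apply, Finset.sum_apply]
  simp only [expand, map_add, map_sum, productMean_inner_const, productMean_inner_comp_eval hw1]

theorem productMean_inner_sub_additivePart (hw1 : ∀ i, ∑ a, w i a = 1) (f : (∀ i, Q i) → E) :
    productMean w (fun q => ⟪(f - additivePart w f) q, additivePart w f q⟫) = 0 := by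
  simp only [productMean_inner_additivePart hw1, map_sub, productMean_additivePart f hw1,
    condMean_additivePart f hw1, sub_self, inner_zero_left, mul_zero, sum_const_zero, add_zero]

theorem productMean_norm_sq_additivePart (hw1 : ∀ i, ∑ a, w i a = 1) (f : (∀ i, Q i) → E) :
    productMean w (fun q => ‖additivePart w f q‖ ^ 2) =
      ‖productMean w f‖ ^ 2 + ∑ i, ∑ a, w i a * ‖mainEffect w f i a‖ ^ 2 := by
  have cross_term (i : ι) : ∑ a, w i a * ⟪productMean w f, mainEffect w f i a⟫ = 0 := by
    simp only [← real_inner_smul_right, ← inner_sum, sum_smul_mainEffect f hw1, inner_zero_right]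
  have condMean_eq (i : ι) (a : Q i) :
      condMean w i a f = productMean w f + mainEffect w f i a :=
    (add_sub_cancel _ _).symm
  simp only [← real_inner_self_eq_norm_sq, productMean_inner_additivePart hw1,
    productMean_additivePart f hw1, condMean_additivePart f hw1]
  simp only [condMean_eq, inner_add_left, mul_add, sum_add_distrib, cross_term, zero_add]

theorem productMean_norm_sq_eq_add (hw1 : ∀ i, ∑ a, w i a = 1) (f : (∀ i, Q i) → E) :
    productMean w (fun q => ‖f q‖ ^ 2) =
      productMean w (fun q => ‖additivePart w f q‖ ^ 2) +
        productMean w (fun q => ‖(f - additivePart w f) q‖ ^ 2) := by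
  have expand : (fun q => ‖f q‖ ^ 2) =
      (fun q => ‖additivePart w f q‖ ^ 2) + (fun q => ‖(f - additivePart w f) q‖ ^ 2) +
        (2 : ℝ) • fun q => ⟪(f - additivePart w f) q, additivePart w f q⟫ := by
    ext q
    have h := norm_add_sq_real ((f - additivePart w f) q) (additivePart w f q)
    simp only [Pi.add_apply, Pi.smul_apply, Pi.sub_apply, sub_add_cancel, smul_eq_mul] at h ⊢
    linarith
  rw [expand, map_add, map_add, map_smul, productMean_inner_sub_additivePart hw1, smul_zero,
    add_zero]

theorem claimA1_part1_general (hw : ∀ i a, 0 ≤ w i a) (hw1 : ∀ i, ∑ a, w i a = 1)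
    (f : (∀ i, Q i) → E) :
    ‖productMean w f‖ ^ 2 + ∑ i, ∑ a, w i a * ‖productMean w f - condMean w i a f‖ ^ 2 ≤
      productMean w (fun q => ‖f q‖ ^ 2) := by
  calc
    _ = productMean w (fun q => ‖additivePart w f q‖ ^ 2) := by
      simp only [productMean_norm_sq_additivePart hw1, mainEffect, norm_sub_rev]
    _ ≤ productMean w (fun q => ‖f q‖ ^ 2) := by
      rw [productMean_norm_sq_eq_add hw1 f]
      exact le_add_of_nonneg_right (productMean_nonneg hw fun q => sq_nonneg _)

end InnerProduct

/-- Part 1 of Claim A.1: for `f` with values in a complex inner product space,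
`M` its mean over the product distribution `μ^C` and `M_{i,q_i}` its mean conditioned on
coordinate `i` equaling `q_i`, if `E‖f‖² ≤ 1` then
`0 ≤ E_{(i,q_i)} ‖M − M_{i,q_i}‖² ≤ (1/C)·E‖f‖² ≤ 1/C`. -/
theorem claimA1_part1 {Q : Type*} [Fintype Q] [Nonempty Q] [DecidableEq Q]
    (w : Q → ℝ) (hw : ∀ q, 0 ≤ w q) (hw1 : ∑ q, w q = 1)
    (C : ℕ) (hC : 0 < C)
    {E : Type*} [NormedAddCommGroup E] [InnerProductSpace ℂ E]
    (f : (Fin C → Q) → E)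
    (hf : ∑ q : Fin C → Q, (∏ i, w (q i)) * ‖f q‖ ^ 2 ≤ 1) :
    let M := ∑ q : Fin C → Q, (∏ i, w (q i)) • f q
    let Mi := fun (i : Fin C) (qi : Q) =>
      ∑ q : Fin C → Q, (∏ j, w (q j)) • f (Function.update q i qi)
    0 ≤ (C : ℝ)⁻¹ * ∑ i : Fin C, ∑ qi : Q, w qi * ‖M - Mi i qi‖ ^ 2 ∧
    (C : ℝ)⁻¹ * ∑ i : Fin C, ∑ qi : Q, w qi * ‖M - Mi i qi‖ ^ 2 ≤
      (C : ℝ)⁻¹ * ∑ q : Fin C → Q, (∏ i, w (q i)) * ‖f q‖ ^ 2 ∧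
    (C : ℝ)⁻¹ * ∑ q : Fin C → Q, (∏ i, w (q i)) * ‖f q‖ ^ 2 ≤ (C : ℝ)⁻¹ := by
  intro M Mi
  let _ : InnerProductSpace ℝ E := .complexToReal
  have bessel : ‖M‖ ^ 2 + ∑ i, ∑ a, w a * ‖M - Mi i a‖ ^ 2 ≤ ∑ q, (∏ i, w (q i)) * ‖f q‖ ^ 2 :=
    claimA1_part1_general (fun _ => hw) (fun _ => hw1) f
  have deviation_nonneg : 0 ≤ ∑ i, ∑ a, w a * ‖M - Mi i a‖ ^ 2 :=
    Fintype.sum_nonneg fun i => Fintype.sum_nonneg fun a => mul_nonneg (hw a) (sq_nonneg _)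
  have hC_inv : (0 : ℝ) ≤ (C : ℝ)⁻¹ := by positivity
  exact ⟨mul_nonneg hC_inv deviation_nonneg,
    mul_le_mul_of_nonneg_left (le_of_add_le_of_nonneg_right bessel (sq_nonneg _)) hC_inv,
    mul_le_of_le_one_right hC_inv hf⟩
end
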